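/- arXiv:1904.10815 — 5 statements merged into one kernel-verified Lean document; each statement's English description precedes it below -/
import Mathlib

section
/- Let f : ℝ_{≥0} → ℝ_{≥0} be strictly increasing and α ∈ [0,1). If the set X(f,α) = { f(n)·e^{2πi n α} : n ∈ ℕ } ⊂ ℂ is r-relatively dense, then limsup_{n→∞} f(n)/√n ≤ 2r. -/
/-- The spiral point set `X(f,α) = { f(n)·e^{2πi n α} : n ∈ ℕ } ⊆ ℂ` for
`f : ℝ≥0 → ℝ≥0` and angle `α`. -/
noncomputable def spiralSet (f : NNReal → NNReal) (α : ℝ) : Set ℂ :=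
  {z : ℂ | ∃ n : ℕ, z = (f n : ℝ) * Complex.exp (2 * Real.pi * Complex.I * (n * α))}

/-!
Let `p` be a sequence with nondecreasing norms whose range is `r`-relatively dense. A point of the
ball of radius `‖p n‖ - r` about the origin is within `r` of some `p k`, which then has norm less
than `‖p n‖`, so `k < n`: that ball is covered by `n` balls of radius `r`. In dimension `d`,
comparing volumes gives `(‖p n‖ - r) ^ d ≤ n * r ^ d`, hence `‖p n‖ ≤ r + n ^ (1 / d) * r`.
For the spiral `d = 2`, and this gives the bound `r` for the limsup.
-/

open Filter Metric Module Topology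
open MeasureTheory (Measure measure_mono measure_biUnion_finset_le)

/-- A set `X` is `r`-relatively dense if every open ball of radius `r` meets it. -/
def IsRelativelyDense {M : Type*} [PseudoMetricSpace M] (r : ℝ) (X : Set M) : Prop :=
  ∀ x, ∃ z ∈ X, z ∈ ball x r

theorem IsRelativelyDense.pos {M : Type*} [PseudoMetricSpace M] [Nonempty M] {r : ℝ} {X : Set M}
    (hX : IsRelativelyDense r X) : 0 < r :=
  have ⟨_, _, hz⟩ := hX (Classical.arbitrary M)
  pos_of_mem_ball hz

theorem IsRelativelyDense.ball_subset_biUnion_ball {ι E : Type*} [LinearOrder ι]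
    [SeminormedAddCommGroup E] {r : ℝ} {p : ι → E} (hX : IsRelativelyDense r (Set.range p))
    (hp : Monotone fun i ↦ ‖p i‖) (i : ι) :
    ball 0 (‖p i‖ - r) ⊆ ⋃ j < i, ball (p j) r := by
  intro x hx
  obtain ⟨_, ⟨j, rfl⟩, hj⟩ := hX x
  have norm_lt : ‖p j‖ < ‖p i‖ := by
    have := norm_lt_of_mem_ball hj
    have := mem_ball_zero_iff.mp hx
    linarith
  exact Set.mem_biUnion (hp.reflect_lt norm_lt) (mem_ball_comm.mp hj)

section FiniteDimensional

variable {E : Type*} [NormedAddCommGroup E] [NormedSpace ℝ E] [FiniteDimensional ℝ E] {r : ℝ}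

theorem pow_finrank_le_of_ball_subset_biUnion_ball {ι : Type*} {s : Finset ι} {c : ι → E} {x : E}
    {R : ℝ} (hR : 0 < R) (hsub : ball x R ⊆ ⋃ i ∈ s, ball (c i) r) :
    R ^ finrank ℝ E ≤ s.card * r ^ finrank ℝ E := by
  borelize E
  let μ : Measure E := Measure.addHaar
  have hr : 0 < r := by
    obtain ⟨_, _, hx⟩ := Set.mem_iUnion₂.mp (hsub (mem_ball_self hR))
    exact pos_of_mem_ball hx
  have volume_le : ENNReal.ofReal (R ^ finrank ℝ E) * μ (ball 0 1) ≤
      ENNReal.ofReal (s.card * r ^ finrank ℝ E) * μ (ball 0 1) :=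
    calc ENNReal.ofReal (R ^ finrank ℝ E) * μ (ball 0 1)
      _ = μ (ball x R) := (μ.addHaar_ball_of_pos x hR).symm
      _ ≤ ∑ i ∈ s, μ (ball (c i) r) :=
        (measure_mono hsub).trans (measure_biUnion_finset_le s _)
      _ = ENNReal.ofReal (s.card * r ^ finrank ℝ E) * μ (ball 0 1) := by
        simp only [μ.addHaar_ball_of_pos _ hr, Finset.sum_const, nsmul_eq_mul,
          ENNReal.ofReal_mul (Nat.cast_nonneg s.card), ENNReal.ofReal_natCast, mul_assoc]
  have unit_ball_pos : μ (ball 0 1) ≠ 0 := (measure_ball_pos μ 0 one_pos).ne'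
  rwa [ENNReal.mul_le_mul_iff_left unit_ball_pos MeasureTheory.measure_ball_lt_top.ne,
    ENNReal.ofReal_le_ofReal_iff (by positivity)] at volume_le

variable [Nontrivial E] {p : ℕ → E}

theorem IsRelativelyDense.norm_le (hX : IsRelativelyDense r (Set.range p))
    (hp : Monotone fun n ↦ ‖p n‖) (n : ℕ) :
    ‖p n‖ ≤ r + (n : ℝ) ^ (finrank ℝ E : ℝ)⁻¹ * r := by
  have hr : 0 < r := hX.pos
  have hd : finrank ℝ E ≠ 0 := finrank_pos.ne'
  obtain hle | hlt := le_or_gt ‖p n‖ r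
  · exact hle.trans (le_add_of_nonneg_right (by positivity))
  · have cover : ball 0 (‖p n‖ - r) ⊆ ⋃ k ∈ Finset.range n, ball (p k) r := by
      simpa only [Finset.mem_range] using hX.ball_subset_biUnion_ball hp n
    have pow_le :
        (‖p n‖ - r) ^ finrank ℝ E ≤ ((n : ℝ) ^ (finrank ℝ E : ℝ)⁻¹ * r) ^ finrank ℝ E := by
      rw [mul_pow, Real.rpow_inv_natCast_pow n.cast_nonneg hd]
      simpa only [Finset.card_range] using
        pow_finrank_le_of_ball_subset_biUnion_ball (sub_pos.mpr hlt) cover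
    exact sub_le_iff_le_add'.mp (le_of_pow_le_pow_left₀ hd (by positivity) pow_le)

theorem IsRelativelyDense.limsup_norm_div_rpow_le (hX : IsRelativelyDense r (Set.range p))
    (hp : Monotone fun n ↦ ‖p n‖) :
    limsup (fun n : ℕ ↦ ((‖p n‖ / (n : ℝ) ^ (finrank ℝ E : ℝ)⁻¹ : ℝ) : EReal)) atTop ≤ r := by
  have root_atTop : Tendsto (fun n : ℕ ↦ (n : ℝ) ^ (finrank ℝ E : ℝ)⁻¹) atTop atTop :=
    (tendsto_rpow_atTop (inv_pos.mpr (Nat.cast_pos.mpr finrank_pos))).comp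
      tendsto_natCast_atTop_atTop
  have bound_tendsto : Tendsto (fun n : ℕ ↦ ((r / (n : ℝ) ^ (finrank ℝ E : ℝ)⁻¹ + r : ℝ) : EReal))
      atTop (𝓝 r) := by
    simpa only [zero_add, EReal.tendsto_coe] using (root_atTop.const_div_atTop r).add_const r
  refine (limsup_le_limsup ?_).trans_eq bound_tendsto.limsup_eq
  filter_upwards [root_atTop.eventually_gt_atTop 0] with n hn
  rw [EReal.coe_le_coe_iff, div_le_iff₀ hn, add_mul, div_mul_cancel₀ _ hn.ne', mul_comm r]
  exact hX.norm_le hp n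

end FiniteDimensional

/-- The `n`-th point of `spiralSet f α`, with argument `2πnα` and modulus `f n`. -/
noncomputable def spiralPoint (f : NNReal → NNReal) (α : ℝ) (n : ℕ) : ℂ :=
  (f n : ℝ) * Complex.exp (2 * Real.pi * Complex.I * (n * α))

theorem spiralSet_eq_range (f : NNReal → NNReal) (α : ℝ) :
    spiralSet f α = Set.range (spiralPoint f α) :=
  Set.ext fun _ ↦ exists_congr fun _ ↦ eq_comm

theorem norm_spiralPoint (f : NNReal → NNReal) (α : ℝ) (n : ℕ) : ‖spiralPoint f α n‖ = f n := by
  have angle_eq : (2 * Real.pi * Complex.I * (n * α) : ℂ) =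
      (2 * Real.pi * (n * α) : ℝ) * Complex.I := by
    push_cast
    ring
  rw [spiralPoint, angle_eq, norm_mul, Complex.norm_exp_ofReal_mul_I, mul_one, Complex.norm_real,
    NNReal.norm_eq]

theorem limsup_le_of_relatively_dense_general {f : NNReal → NNReal} (hf : Monotone f) {α r : ℝ}
    (hdense : IsRelativelyDense r (spiralSet f α)) :
    limsup (fun n : ℕ ↦ (((f n : ℝ) / Real.sqrt n : ℝ) : EReal)) atTop ≤ r := by
  have norm_mono : Monotone fun n ↦ ‖spiralPoint f α n‖ := by
    simp only [norm_spiralPoint]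
    exact NNReal.coe_mono.comp (hf.comp Nat.mono_cast)
  rw [spiralSet_eq_range] at hdense
  simpa only [norm_spiralPoint, Complex.finrank_real_complex, Nat.cast_ofNat, Real.sqrt_eq_rpow,
    one_div] using hdense.limsup_norm_div_rpow_le norm_mono

/-- If `f : ℝ≥0 → ℝ≥0` is strictly increasing, `α ∈ [0,1)`, and
`X(f,α)` is `r`-relatively dense (every open ball of radius `r` meets it), then
`limsup_{n→∞} f(n)/√n ≤ 2r`. -/
theorem limsup_le_of_relatively_dense
    (f : NNReal → NNReal) (hf : StrictMono f)
    (α : ℝ) (hα : α ∈ Set.Ico (0 : ℝ) 1) (r : ℝ) (hr : 0 < r)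
    (hdense : ∀ x : ℂ, ∃ z ∈ spiralSet f α, z ∈ Metric.ball x r) :
    Filter.limsup (fun n : ℕ => (((f n : ℝ) / Real.sqrt n : ℝ) : EReal))
      Filter.atTop ≤ ((2 * r : ℝ) : EReal) :=
  (limsup_le_of_relatively_dense_general hf.monotone hdense).trans <|
    EReal.coe_le_coe_iff.mpr (by linarith)
end

section
/- Let α ∈ [0,1) be irrational. The set X(√t, α) = { √n · e^{2πi n α} : n ∈ ℕ } ⊂ ℂ is uniformly discrete if and only if α is badly approximable. -/
/-- The Fermat-spiral point set `X(√t, α) = { √n·e^{2πi n α} : n ∈ ℕ } ⊆ ℂ`. -/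
noncomputable def fermatSpiral (α : ℝ) : Set ℂ :=
  {z : ℂ | ∃ n : ℕ, z = Real.sqrt n * Complex.exp (2 * Real.pi * Complex.I * (n * α))}

/-- `X ⊆ ℂ` is uniformly discrete: some radius `s > 0` such that every open ball of
radius `s` contains at most one point of `X`. -/
def IsUniformlyDiscrete (X : Set ℂ) : Prop :=
  ∃ s : ℝ, 0 < s ∧ ∀ x : ℂ, Set.Subsingleton (X ∩ Metric.ball x s)

/-- `α` is badly approximable: `q·|qα − p| ≥ C > 0` for all `p ∈ ℤ`, `q ∈ ℕ`, `q ≥ 1`. -/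
def IsBadlyApproximable (α : ℝ) : Prop :=
  ∃ C : ℝ, 0 < C ∧ ∀ (p : ℤ) (q : ℕ), 1 ≤ q → C ≤ (q : ℝ) * |(q : ℝ) * α - (p : ℝ)|

/-!
Write `‖x‖ = |x - round x|` for the distance of `x` to the nearest integer. With
`θ = π(m - n)α`, a rotation turns `√m·e^{2πimα} - √n·e^{2πinα}` into
`(√m - √n) cos θ + i (√m + √n) sin θ`, where `|sin θ|` is comparable to `‖(m - n)α‖`.

The distance of the two points is therefore at least `|√m - √n|` and at least
`2 (√m + √n) ‖(m - n)α‖`, so its square is at least the product `2 |m - n| ‖(m - n)α‖`: bad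
approximability separates the points. Conversely, the points with indices `(kq)² + q` and `(kq)²`
have radii of size about `kq` that differ by at most `1 / (2k)`, so their distance is at most
`1 / (2k) + O(k · q‖qα‖)`; once `k` exceeds the inverse of the separation, this bounds `q‖qα‖`
from below.
-/

open Real

theorem isUniformlyDiscrete_range_iff {ι : Type*} {f : ι → ℂ} (hf : Function.Injective f) :
    IsUniformlyDiscrete (Set.range f) ↔
      ∃ s : ℝ, 0 < s ∧ Pairwise fun i j => s ≤ dist (f i) (f j) := by
  constructor
  · rintro ⟨s, hs, hX⟩
    refine ⟨s, hs, fun i j hij => ?_⟩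
    by_contra! hlt
    exact hij (hf (hX (f j) ⟨⟨i, rfl⟩, hlt⟩ ⟨⟨j, rfl⟩, Metric.mem_ball_self hs⟩))
  · rintro ⟨s, hs, hsep⟩
    refine ⟨s / 2, half_pos hs, ?_⟩
    rintro x _ ⟨⟨i, rfl⟩, hi⟩ _ ⟨⟨j, rfl⟩, hj⟩
    by_contra hne
    have hle : s ≤ dist (f i) (f j) := hsep fun hij => hne (congrArg f hij)
    have htri := dist_triangle_right (f i) (f j) x
    rw [Metric.mem_ball] at hi hj
    linarith

theorem IsBadlyApproximable.exists_forall_int_le {α : ℝ} (h : IsBadlyApproximable α) :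
    ∃ C : ℝ, 0 < C ∧ ∀ p q : ℤ, q ≠ 0 → C ≤ |(q : ℝ)| * |q * α - p| := by
  obtain ⟨C, hC, h⟩ := h
  refine ⟨C, hC, fun p q hq => ?_⟩
  obtain ⟨n, rfl | rfl⟩ := q.eq_nat_or_neg
  · simpa using h p n (by omega)
  · rw [← abs_neg (_ * α - _)]
    simpa [add_comm] using h (-p) n (by omega)

theorem abs_sin_pi_mul_sub_int (x : ℝ) (p : ℤ) : |sin (π * (x - p))| = |sin (π * x)| := by
  rw [mul_sub, mul_comm π (p : ℝ), sin_sub_int_mul_pi, abs_mul, abs_neg_one_zpow, one_mul]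

theorem two_mul_abs_sub_round_le_abs_sin_pi_mul (x : ℝ) :
    2 * |x - round x| ≤ |sin (π * x)| := by
  have hsmall : |π * (x - round x)| ≤ π / 2 := by
    rw [abs_mul, abs_of_pos pi_pos]
    linarith [mul_le_mul_of_nonneg_left (abs_sub_round x) pi_pos.le]
  calc 2 * |x - round x| = 2 / π * |π * (x - round x)| := by
        rw [abs_mul, abs_of_pos pi_pos]
        field_simp
    _ ≤ |sin (π * (x - round x))| := mul_abs_le_abs_sin hsmall
    _ = |sin (π * x)| := abs_sin_pi_mul_sub_int x (round x)

theorem abs_sin_pi_mul_le (x : ℝ) (p : ℤ) : |sin (π * x)| ≤ π * |x - p| :=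
  calc |sin (π * x)| = |sin (π * (x - p))| := (abs_sin_pi_mul_sub_int x p).symm
    _ ≤ |π * (x - p)| := abs_sin_le_abs
    _ = π * |x - p| := by rw [abs_mul, abs_of_pos pi_pos]

theorem sqrt_sq_add_le {x y : ℝ} (hx : 0 < x) (hy : 0 ≤ y) : √(x ^ 2 + y) ≤ x + y / (2 * x) := by
  refine sqrt_le_iff.2 ⟨by positivity, ?_⟩
  have hsq : (x + y / (2 * x)) ^ 2 = x ^ 2 + y + (y / (2 * x)) ^ 2 := by
    field_simp
    ring
  linarith [sq_nonneg (y / (2 * x))]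

theorem mul_exp_sub_mul_exp (a b x y : ℝ) :
    a * Complex.exp (x * Complex.I) - b * Complex.exp (y * Complex.I) =
      Complex.exp (((x + y) / 2 : ℝ) * Complex.I) *
        ⟨(a - b) * cos ((x - y) / 2), (a + b) * sin ((x - y) / 2)⟩ := by
  have hx : x = (x + y) / 2 + (x - y) / 2 := by ring
  have hy : y = (x + y) / 2 - (x - y) / 2 := by ring
  generalize (x + y) / 2 = μ at *
  generalize (x - y) / 2 = θ at *
  subst hx hy
  apply Complex.ext <;>
    simp only [Complex.sub_re, Complex.sub_im, Complex.mul_re, Complex.mul_im, Complex.ofReal_re,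
      Complex.ofReal_im, Complex.exp_ofReal_mul_I_re, Complex.exp_ofReal_mul_I_im, cos_add,
      cos_sub, sin_add, sin_sub] <;>
    ring

theorem norm_mul_exp_sub_mul_exp (a b x y : ℝ) :
    ‖a * Complex.exp (x * Complex.I) - b * Complex.exp (y * Complex.I)‖ =
      ‖(⟨(a - b) * cos ((x - y) / 2), (a + b) * sin ((x - y) / 2)⟩ : ℂ)‖ := by
  rw [mul_exp_sub_mul_exp, norm_mul, Complex.norm_exp_ofReal_mul_I, one_mul]

/-- The `n`-th point `√n·e^{2πi n α}` of the Fermat spiral with angle `α`. The formula is spelled as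
in `fermatSpiral`, so that `fermatSpiral α` is the range of this sequence by definition. -/
noncomputable def fermatSpiralPoint (α : ℝ) (n : ℕ) : ℂ :=
  √n * Complex.exp (2 * π * Complex.I * (n * α))

section FermatSpiralPoint

variable (α : ℝ)

theorem range_fermatSpiralPoint : Set.range (fermatSpiralPoint α) = fermatSpiral α :=
  Set.ext fun _ => exists_congr fun _ => eq_comm

theorem fermatSpiralPoint_eq_mul_exp_mul_I (n : ℕ) :
    fermatSpiralPoint α n = (√n : ℝ) * Complex.exp ((2 * π * (n * α) : ℝ) * Complex.I) := by
  rw [fermatSpiralPoint]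
  congr 2
  push_cast
  ring

theorem norm_fermatSpiralPoint (n : ℕ) : ‖fermatSpiralPoint α n‖ = √n := by
  rw [fermatSpiralPoint_eq_mul_exp_mul_I, norm_mul, Complex.norm_exp_ofReal_mul_I, mul_one,
    Complex.norm_of_nonneg (sqrt_nonneg _)]

theorem fermatSpiralPoint_injective : Function.Injective (fermatSpiralPoint α) := by
  intro m n hmn
  have hsqrt : √(m : ℝ) = √n := by
    rw [← norm_fermatSpiralPoint α m, hmn, norm_fermatSpiralPoint]
  exact_mod_cast (sqrt_inj m.cast_nonneg n.cast_nonneg).1 hsqrt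

variable (m n : ℕ)

theorem dist_fermatSpiralPoint :
    dist (fermatSpiralPoint α m) (fermatSpiralPoint α n) =
      ‖(⟨(√m - √n) * cos (π * ((m - n) * α)), (√m + √n) * sin (π * ((m - n) * α))⟩ : ℂ)‖ := by
  have hangle : (2 * π * (m * α) - 2 * π * (n * α)) / 2 = π * ((m - n) * α) := by ring
  rw [dist_eq_norm, fermatSpiralPoint_eq_mul_exp_mul_I, fermatSpiralPoint_eq_mul_exp_mul_I,
    norm_mul_exp_sub_mul_exp, hangle]

theorem abs_sqrt_sub_sqrt_le_dist_fermatSpiralPoint :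
    |√m - √n| ≤ dist (fermatSpiralPoint α m) (fermatSpiralPoint α n) := by
  rw [← norm_fermatSpiralPoint α m, ← norm_fermatSpiralPoint α n, dist_eq_norm]
  exact abs_norm_sub_norm_le _ _

theorem sqrt_add_sqrt_mul_abs_sin_le_dist_fermatSpiralPoint :
    (√m + √n) * |sin (π * ((m - n) * α))| ≤
      dist (fermatSpiralPoint α m) (fermatSpiralPoint α n) := by
  calc (√m + √n) * |sin (π * ((m - n) * α))| = |(√m + √n) * sin (π * ((m - n) * α))| := by
        rw [abs_mul, abs_of_nonneg (by positivity : 0 ≤ √(m : ℝ) + √n)]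
    _ ≤ dist (fermatSpiralPoint α m) (fermatSpiralPoint α n) := by
        rw [dist_fermatSpiralPoint]
        exact Complex.abs_im_le_norm ⟨_, _⟩

theorem dist_fermatSpiralPoint_le :
    dist (fermatSpiralPoint α m) (fermatSpiralPoint α n) ≤
      |√m - √n| + (√m + √n) * |sin (π * ((m - n) * α))| := by
  rw [dist_fermatSpiralPoint]
  refine (Complex.norm_le_abs_re_add_abs_im _).trans (add_le_add ?_ ?_)
  · rw [abs_mul]
    exact mul_le_of_le_one_right (abs_nonneg _) (abs_cos_le_one _)
  · rw [abs_mul, abs_of_nonneg (by positivity : 0 ≤ √(m : ℝ) + √n)]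

theorem two_mul_abs_sub_mul_abs_sub_round_le_dist_fermatSpiralPoint_sq :
    2 * (|(m - n : ℝ)| * |(m - n) * α - round ((m - n) * α)|) ≤
      dist (fermatSpiralPoint α m) (fermatSpiralPoint α n) ^ 2 := by
  have hprod : |(m - n : ℝ)| = |√m - √n| * (√m + √n) := by
    rw [← abs_of_nonneg (by positivity : 0 ≤ √(m : ℝ) + √n), ← abs_mul, mul_comm (√m - √n),
      ← sq_sub_sq, sq_sqrt m.cast_nonneg, sq_sqrt n.cast_nonneg]
  calc 2 * (|(m - n : ℝ)| * |(m - n) * α - round ((m - n) * α)|)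
      = |√m - √n| * ((√m + √n) * (2 * |(m - n) * α - round ((m - n) * α)|)) := by
        rw [hprod]
        ring
    _ ≤ |√m - √n| * ((√m + √n) * |sin (π * ((m - n) * α))|) := by
        gcongr
        exact two_mul_abs_sub_round_le_abs_sin_pi_mul _
    _ ≤ dist (fermatSpiralPoint α m) (fermatSpiralPoint α n) ^ 2 := by
        rw [sq]
        exact mul_le_mul (abs_sqrt_sub_sqrt_le_dist_fermatSpiralPoint α m n)
          (sqrt_add_sqrt_mul_abs_sin_le_dist_fermatSpiralPoint α m n) (by positivity) dist_nonneg

theorem dist_fermatSpiralPoint_sq_add_le {k q : ℕ} (hk : 0 < k) (hq : 0 < q) (p : ℤ) :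
    dist (fermatSpiralPoint α ((k * q) ^ 2 + q)) (fermatSpiralPoint α ((k * q) ^ 2)) ≤
      1 / (2 * k) + 3 * π * k * (q * |q * α - p|) := by
  have hk1 : (1 : ℝ) ≤ k := by exact_mod_cast hk
  have hq1 : (1 : ℝ) ≤ q := by exact_mod_cast hq
  have hinner : √(((k * q) ^ 2 : ℕ) : ℝ) = k * q := by
    push_cast
    exact sqrt_sq (by positivity)
  have houter_ge : (k * q : ℝ) ≤ √(((k * q) ^ 2 + q : ℕ) : ℝ) := by
    push_cast
    exact le_sqrt_of_sq_le (by linarith)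
  have houter_le : √(((k * q) ^ 2 + q : ℕ) : ℝ) ≤ k * q + 1 / (2 * k) := by
    push_cast
    refine (sqrt_sq_add_le (by positivity) (by positivity)).trans_eq ?_
    field_simp
  have hgap : 1 / (2 * k : ℝ) ≤ k * q := by
    calc 1 / (2 * k : ℝ) ≤ 1 := (div_le_one (by positivity)).2 (by linarith)
      _ ≤ k * q := one_le_mul_of_one_le_of_one_le hk1 hq1
  have hindex : (((k * q) ^ 2 + q : ℕ) : ℝ) - ((k * q) ^ 2 : ℕ) = q := by
    push_cast
    ring
  calc dist (fermatSpiralPoint α ((k * q) ^ 2 + q)) (fermatSpiralPoint α ((k * q) ^ 2))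
      ≤ |√(((k * q) ^ 2 + q : ℕ) : ℝ) - k * q| +
          (√(((k * q) ^ 2 + q : ℕ) : ℝ) + k * q) * |sin (π * (q * α))| :=
        (dist_fermatSpiralPoint_le α _ _).trans_eq (by rw [hindex, hinner])
    _ ≤ 1 / (2 * k) + 3 * (k * q) * (π * |q * α - p|) := by
        rw [abs_of_nonneg (by linarith)]
        gcongr
        · linarith
        · linarith
        · exact abs_sin_pi_mul_le (q * α) p
    _ = 1 / (2 * k) + 3 * π * k * (q * |q * α - p|) := by ring

end FermatSpiralPoint

theorem isBadlyApproximable_of_le_dist_fermatSpiralPoint {α s : ℝ} (hs : 0 < s)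
    (hsep : Pairwise fun m n => s ≤ dist (fermatSpiralPoint α m) (fermatSpiralPoint α n)) :
    IsBadlyApproximable α := by
  obtain ⟨k, hk⟩ := exists_nat_gt (1 / s)
  have hk0 : (0 : ℝ) < k := (one_div_pos.2 hs).trans hk
  refine ⟨s / (6 * π * k), by positivity, fun p q hq => ?_⟩
  have hle : s ≤ 1 / (2 * k) + 3 * π * k * (q * |q * α - p|) :=
    (hsep (by omega)).trans
      (dist_fermatSpiralPoint_sq_add_le α (by exact_mod_cast hk0) hq p)
  have hhalf : 1 / (2 * k) ≤ s / 2 := by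
    have hinv : 1 / (k : ℝ) < s := (one_div_lt hs hk0).1 hk
    calc 1 / (2 * k) = 1 / (k : ℝ) / 2 := by ring
      _ ≤ s / 2 := by gcongr
  rw [div_le_iff₀ (by positivity)]
  linarith

theorem IsBadlyApproximable.exists_le_dist_fermatSpiralPoint {α : ℝ}
    (h : IsBadlyApproximable α) :
    ∃ s : ℝ, 0 < s ∧
      Pairwise fun m n => s ≤ dist (fermatSpiralPoint α m) (fermatSpiralPoint α n) := by
  obtain ⟨C, hC, hle⟩ := h.exists_forall_int_le
  refine ⟨√(2 * C), by positivity, fun m n hmn => sqrt_le_iff.2 ⟨dist_nonneg, ?_⟩⟩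
  have hmul : C ≤ |(m - n : ℝ)| * |(m - n) * α - round ((m - n) * α)| := by
    exact_mod_cast hle (round ((m - n : ℝ) * α)) (m - n) (by omega)
  linarith [two_mul_abs_sub_mul_abs_sub_round_le_dist_fermatSpiralPoint_sq α m n]

theorem fermatSpiral_uniformlyDiscrete_iff_badlyApproximable_general (α : ℝ) :
    IsUniformlyDiscrete (fermatSpiral α) ↔ IsBadlyApproximable α := by
  rw [← range_fermatSpiralPoint, isUniformlyDiscrete_range_iff (fermatSpiralPoint_injective α)]
  exact ⟨fun ⟨_, hs, hsep⟩ => isBadlyApproximable_of_le_dist_fermatSpiralPoint hs hsep,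
    IsBadlyApproximable.exists_le_dist_fermatSpiralPoint⟩

/-- For irrational `α ∈ [0,1)`, the set `X(√t, α)` is uniformly
discrete if and only if `α` is badly approximable. -/
theorem fermatSpiral_uniformlyDiscrete_iff_badlyApproximable
    (α : ℝ) (hα : α ∈ Set.Ico (0 : ℝ) 1) (hirr : Irrational α) :
    IsUniformlyDiscrete (fermatSpiral α) ↔ IsBadlyApproximable α :=
  fermatSpiral_uniformlyDiscrete_iff_badlyApproximable_general α
end

section
/- Let α ∈ [0,1) be irrational with continued fraction expansion α = [0; a₁, a₂, a₃, …]. If all partial quotients satisfy aₖ ≤ B for a positive integer B, then the set X(√t, α) = { √n · e^{2πi n α} : n ∈ ℕ } ⊂ ℂ is 6√B-relatively dense. -/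
/-!
Let `p / q` be a fraction in lowest terms close to `α`. Among any `q` consecutive integers `n`, the
multiples `n α` are nearly `q` equally spaced points modulo `1`, so one of them comes within
`(1 / q + |q α - p|) / 2` of a prescribed angle. Taking the window of `n` just above `r ^ 2` gives a
point of the spiral at distance at most `q / (2 r) + π r (1 / q + |q α - p|)` from a given point of
modulus `r`. This bound balances when `q` is of order `r`. If the partial quotients are at most `B`,
consecutive denominators of convergents grow by a factor of at most `B + 1`, so there is a suitable
convergent at every scale.
-/

/-- Denominators of the convergents of the continued fraction with partial quotients `a`. In the
classical indexing `[0; a₁, a₂, …]` with `q₋₁ = 0` and `q₀ = 1`, the term `a k` is `aₖ₊₁` and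
`convDen a k` is `qₖ₋₁`. -/
def convDen (a : ℕ → ℤ) : ℕ → ℤ
  | 0 => 0
  | 1 => 1
  | k + 2 => a k * convDen a (k + 1) + convDen a k

/-- Numerators of the convergents of the continued fraction with partial quotients `a`, indexed as
in `convDen`: in the classical notation `convNum a k` is `pₖ₋₁`, with `p₋₁ = 1` and `p₀ = 0`. -/
def convNum (a : ℕ → ℤ) : ℕ → ℤ
  | 0 => 1
  | 1 => 0
  | k + 2 => a k * convNum a (k + 1) + convNum a k

/-- `η` is the sequence of remainders of a nonterminating Euclidean algorithm, started at `η 0` and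
`η 1`, whose quotients are `a`. For `η 0 = 1` the `a k` are the partial quotients of `η 1`. -/
structure IsEuclideanRemainder {R : Type*} [Ring R] [LT R] (a : ℕ → ℤ) (η : ℕ → R) : Prop where
  pos (k : ℕ) : 0 < η k
  lt (k : ℕ) : η (k + 1) < η k
  eq_mul_add (k : ℕ) : η k = a k * η (k + 1) + η (k + 2)

section Convergents

variable {R : Type*} [CommRing R] {a : ℕ → ℤ}

theorem convDen_mul_convNum_sub (a : ℕ → ℤ) (k : ℕ) :
    convDen a (k + 1) * convNum a k - convDen a k * convNum a (k + 1) = (-1) ^ k := by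
  induction k with
  | zero => simp [convDen, convNum]
  | succ k ih =>
    rw [convDen, convNum, pow_succ]
    linear_combination -ih

theorem isCoprime_convNum_convDen (a : ℕ → ℤ) (k : ℕ) : IsCoprime (convNum a k) (convDen a k) := by
  have hunit : ((-1 : ℤ) ^ k) * (-1) ^ k = 1 := by rw [← mul_pow]; simp
  refine ⟨(-1) ^ k * convDen a (k + 1), -((-1) ^ k * convNum a (k + 1)), ?_⟩
  linear_combination (-1) ^ k * convDen_mul_convNum_sub a k + hunit

theorem convDen_mul_add {η : ℕ → R} (hη : ∀ k, η k = a k * η (k + 1) + η (k + 2)) (k : ℕ) :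
    convDen a (k + 1) * η k + convDen a k * η (k + 1) = η 0 := by
  induction k with
  | zero => simp [convDen]
  | succ k ih =>
    rw [convDen]
    push_cast
    linear_combination ih - (convDen a (k + 1) : R) * hη k

theorem convDen_mul_sub_convNum_mul {η : ℕ → R} (hη : ∀ k, η k = a k * η (k + 1) + η (k + 2))
    (k : ℕ) :
    convDen a k * η 1 - convNum a k * η 0 = -(-1) ^ k * η k := by
  induction k using Nat.twoStepInduction with
  | zero => simp [convDen, convNum]
  | one => simp [convDen, convNum]
  | more k ih₀ ih₁ =>
    rw [convDen, convNum]
    push_cast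
    linear_combination (a k : R) * ih₁ + ih₀ - (-1) ^ k * hη k

theorem fib_le_convDen (ha : ∀ k, 1 ≤ a k) (k : ℕ) : (Nat.fib k : ℤ) ≤ convDen a k := by
  induction k using Nat.twoStepInduction with
  | zero => simp [convDen]
  | one => simp [convDen]
  | more k ih₀ ih₁ =>
    have hmul : convDen a (k + 1) ≤ a k * convDen a (k + 1) :=
      le_mul_of_one_le_left ((Int.natCast_nonneg _).trans ih₁) (ha k)
    rw [Nat.fib_add_two, convDen]
    push_cast
    linarith

theorem convDen_nonneg (ha : ∀ k, 1 ≤ a k) (k : ℕ) : 0 ≤ convDen a k :=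
  (Int.natCast_nonneg _).trans (fib_le_convDen ha k)

theorem convDen_succ_pos (ha : ∀ k, 1 ≤ a k) (k : ℕ) : 0 < convDen a (k + 1) :=
  (Int.natCast_pos.mpr (Nat.fib_pos.mpr k.succ_pos)).trans_le (fib_le_convDen ha (k + 1))

theorem convDen_le_succ (ha : ∀ k, 1 ≤ a k) : ∀ k, convDen a k ≤ convDen a (k + 1)
  | 0 => zero_le_one
  | k + 1 => by
    rw [convDen]
    nlinarith [ha k, convDen_nonneg ha k, convDen_nonneg ha (k + 1)]

theorem convDen_add_two_le_mul {B : ℤ} (ha : ∀ k, 1 ≤ a k) (haB : ∀ k, a k ≤ B) (k : ℕ) :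
    convDen a (k + 2) ≤ (B + 1) * convDen a (k + 1) := by
  rw [convDen, add_one_mul]
  exact add_le_add (mul_le_mul_of_nonneg_right (haB k) (convDen_nonneg ha _)) (convDen_le_succ ha k)

theorem exists_convDen_le_lt [LinearOrder R] [IsStrictOrderedRing R] [Archimedean R]
    (ha : ∀ k, 1 ≤ a k) {N : R} (hN : 1 ≤ N) :
    ∃ k, (convDen a (k + 1) : R) ≤ N ∧ N < convDen a (k + 2) := by
  by_contra! hstep
  have hbdd (k : ℕ) : (convDen a (k + 1) : R) ≤ N := by
    induction k with
    | zero => simpa [convDen] using hN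
    | succ k ih => exact hstep k ih
  obtain ⟨k, hk⟩ := exists_nat_gt N
  have hfib : (k : ℤ) ≤ convDen a (k + 1) := by
    have hge := fib_le_convDen ha (k + 1)
    have hle := Nat.le_fib_add_one (k + 1)
    omega
  have hfib' : (k : R) ≤ convDen a (k + 1) := by exact_mod_cast hfib
  linarith [hbdd k]

end Convergents

namespace IsEuclideanRemainder

variable {R : Type*} [CommRing R] [LinearOrder R] [IsStrictOrderedRing R]
  {a : ℕ → ℤ} {η : ℕ → R}

theorem one_le_quotient (h : IsEuclideanRemainder a η) (k : ℕ) : 1 ≤ a k := by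
  have hmul : 0 < (a k : R) * η (k + 1) := by
    linarith [h.eq_mul_add k, h.lt k, h.lt (k + 1)]
  exact_mod_cast pos_of_mul_pos_left hmul (h.pos (k + 1)).le

theorem abs_convDen_mul_sub_convNum_mul (h : IsEuclideanRemainder a η) (k : ℕ) :
    |convDen a k * η 1 - convNum a k * η 0| = η k := by
  rw [convDen_mul_sub_convNum_mul h.eq_mul_add, abs_mul, abs_neg, abs_neg_one_pow, one_mul,
    abs_of_pos (h.pos k)]

theorem convDen_succ_mul_le (h : IsEuclideanRemainder a η) (k : ℕ) :
    convDen a (k + 1) * η k ≤ η 0 := by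
  have hnonneg : (0 : R) ≤ convDen a k := by exact_mod_cast convDen_nonneg h.one_le_quotient k
  linarith [convDen_mul_add h.eq_mul_add k, mul_nonneg hnonneg (h.pos (k + 1)).le]

theorem exists_isCoprime_approx [Archimedean R] (h : IsEuclideanRemainder a η) {B : ℤ}
    (haB : ∀ k, a k ≤ B) {N : R} (hN : 1 ≤ N) :
    ∃ p q : ℤ, IsCoprime p q ∧ 0 < q ∧ q ≤ N ∧ N ≤ (B + 1) * q ∧
      N * |q * η 1 - p * η 0| ≤ η 0 := by
  have ha := h.one_le_quotient
  obtain ⟨k, hle, hlt⟩ := exists_convDen_le_lt ha hN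
  refine ⟨convNum a (k + 1), convDen a (k + 1), isCoprime_convNum_convDen a _,
    convDen_succ_pos ha k, hle, hlt.le.trans ?_, ?_⟩
  · exact_mod_cast convDen_add_two_le_mul ha haB k
  · rw [h.abs_convDen_mul_sub_convNum_mul]
    exact (mul_le_mul_of_nonneg_right hlt.le (h.pos _).le).trans (h.convDen_succ_mul_le (k + 1))

end IsEuclideanRemainder

theorem exists_mem_Ico_mul_eq_mul_add_of_isCoprime {p q : ℤ} (hpq : IsCoprime p q) (hq : 0 < q)
    (m t : ℤ) : ∃ n ∈ Set.Ico m (m + q), ∃ l : ℤ, n * p = l * q + t := by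
  obtain ⟨u, v, huv⟩ := hpq
  refine ⟨toIcoMod hq m (t * u), toIcoMod_mem_Ico hq m _, -(t * v) - toIcoDiv hq m (t * u) * p, ?_⟩
  rw [toIcoMod, smul_eq_mul]
  linear_combination t * huv

theorem exists_mem_Ico_abs_mul_sub_sub_le {K : Type*} [Field K] [LinearOrder K]
    [IsStrictOrderedRing K] [FloorRing K] {p q : ℤ} (hpq : IsCoprime p q) (hq : 0 < q)
    (α θ : K) (m : ℤ) :
    ∃ n ∈ Set.Ico m (m + q), ∃ l : ℤ, |n * α - θ - l| ≤ (1 / q + |q * α - p|) / 2 := by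
  have hq' : (0 : K) < q := by exact_mod_cast hq
  set δ : K := q * α - p with hδ
  -- Measuring the drift `n * δ` from the midpoint `c` of the window halves its contribution.
  set c : K := m + q / 2 with hc
  set y : K := q * θ - c * δ with hy
  obtain ⟨n, hn, l, hnl⟩ := exists_mem_Ico_mul_eq_mul_add_of_isCoprime hpq hq m (round y)
  refine ⟨n, hn, l, ?_⟩
  have hnl' : (n : K) * p = l * q + round y := by exact_mod_cast hnl
  have hdrift : |n - c| ≤ q / 2 := by
    have hlow : (m : K) ≤ n := by exact_mod_cast hn.1
    have hupp : (n : K) ≤ m + q := by exact_mod_cast hn.2.le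
    rw [abs_le]
    constructor <;> linarith
  have hsplit : q * (n * α - θ - l) = (n - c) * δ - (y - round y) := by
    rw [hy]
    linear_combination hnl' - (n : K) * hδ
  have hscaled : q * |n * α - θ - l| ≤ q / 2 * |δ| + 1 / 2 := by
    calc q * |n * α - θ - l| = |(n - c) * δ - (y - round y)| := by
          rw [← hsplit, abs_mul, abs_of_pos hq']
      _ ≤ |n - c| * |δ| + |y - round y| := by
          rw [← abs_mul]
          exact abs_sub _ _
      _ ≤ q / 2 * |δ| + 1 / 2 := by
          gcongr
          exact abs_sub_round y
  calc |n * α - θ - l| ≤ (q / 2 * |δ| + 1 / 2) / q := by rwa [le_div_iff₀' hq']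
    _ = (1 / q + |δ|) / 2 := by field_simp; ring

theorem norm_mul_exp_sub_mul_exp_le (ρ r φ ψ : ℝ) :
    ‖(ρ * Complex.exp (φ * Complex.I) - r * Complex.exp (ψ * Complex.I) : ℂ)‖
      ≤ |ρ - r| + |r| * |φ - ψ| := by
  have hsplit : (ρ * Complex.exp (φ * Complex.I) - r * Complex.exp (ψ * Complex.I) : ℂ)
      = (ρ - r : ℝ) * Complex.exp (φ * Complex.I)
        + r * (Complex.exp (ψ * Complex.I) * (Complex.exp (Complex.I * (φ - ψ : ℝ)) - 1)) := by
    rw [mul_sub_one, ← Complex.exp_add]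
    push_cast
    ring_nf
  rw [hsplit]
  refine (norm_add_le _ _).trans ?_
  simp only [norm_mul, Complex.norm_exp_ofReal_mul_I, Complex.norm_real, Real.norm_eq_abs, mul_one,
    one_mul]
  gcongr
  exact Real.norm_exp_I_mul_ofReal_sub_one_le

theorem sqrt_sq_add_le_s6 {r h : ℝ} (hr : 0 < r) (hh : 0 ≤ h) : √(r ^ 2 + h) ≤ r + h / (2 * r) := by
  refine Real.sqrt_le_iff.mpr ⟨by positivity, ?_⟩
  have hsq : (r + h / (2 * r)) ^ 2 = r ^ 2 + h + (h / (2 * r)) ^ 2 := by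
    field_simp
    ring
  linarith [sq_nonneg (h / (2 * r))]

theorem abs_sqrt_sub_le {r h y : ℝ} (hr : 0 < r) (hlow : r ^ 2 ≤ y) (hupp : y ≤ r ^ 2 + h) :
    |√y - r| ≤ h / (2 * r) := by
  rw [abs_of_nonneg (sub_nonneg.mpr (Real.le_sqrt_of_sq_le hlow)), sub_le_iff_le_add']
  exact (Real.sqrt_le_sqrt hupp).trans (sqrt_sq_add_le_s6 hr (by linarith))

theorem exists_mem_fermatSpiral_dist_le {p q : ℤ} (hpq : IsCoprime p q) (hq : 0 < q) (α : ℝ)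
    {x : ℂ} (hx : x ≠ 0) :
    ∃ z ∈ fermatSpiral α,
      dist z x ≤ q / (2 * ‖x‖) + Real.pi * ‖x‖ * (1 / q + |q * α - p|) := by
  obtain ⟨n, ⟨hlow, hupp⟩, l, hnl⟩ := exists_mem_Ico_abs_mul_sub_sub_le hpq hq α
    (x.arg / (2 * Real.pi)) ⌈‖x‖ ^ 2⌉
  lift n to ℕ using (Int.ceil_nonneg (sq_nonneg _)).trans hlow
  refine ⟨_, ⟨n, rfl⟩, ?_⟩
  have hradial : |√n - ‖x‖| ≤ q / (2 * ‖x‖) := by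
    refine abs_sqrt_sub_le (norm_pos_iff.mpr hx) (by exact_mod_cast Int.ceil_le.mp hlow) ?_
    have hupp' : (n : ℝ) + 1 ≤ ⌈‖x‖ ^ 2⌉ + q := by exact_mod_cast hupp
    linarith [Int.ceil_lt_add_one (‖x‖ ^ 2)]
  have hangular : |2 * Real.pi * (n * α - l) - x.arg| ≤ Real.pi * (1 / q + |q * α - p|) := by
    calc |2 * Real.pi * (n * α - l) - x.arg|
        = 2 * Real.pi * |n * α - x.arg / (2 * Real.pi) - l| := by
          rw [← abs_of_pos Real.two_pi_pos, ← abs_mul, abs_of_pos Real.two_pi_pos]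
          congr 1
          field_simp
          ring
      _ ≤ 2 * Real.pi * ((1 / q + |q * α - p|) / 2) := by
          gcongr
          exact_mod_cast hnl
      _ = Real.pi * (1 / q + |q * α - p|) := by ring
  have hexp : Complex.exp (2 * Real.pi * Complex.I * (n * α))
      = Complex.exp ((2 * Real.pi * (n * α - l) : ℝ) * Complex.I) := by
    refine Complex.exp_eq_exp_iff_exists_int.mpr ⟨l, ?_⟩
    push_cast
    ring
  calc dist (√n * Complex.exp (2 * Real.pi * Complex.I * (n * α)) : ℂ) x
      = ‖(√n * Complex.exp ((2 * Real.pi * (n * α - l) : ℝ) * Complex.I)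
          - ‖x‖ * Complex.exp (x.arg * Complex.I) : ℂ)‖ := by
        rw [Complex.norm_mul_exp_arg_mul_I, hexp, dist_eq_norm]
    _ ≤ |√n - ‖x‖| + ‖x‖ * |2 * Real.pi * (n * α - l) - x.arg| := by
        simpa only [abs_norm] using norm_mul_exp_sub_mul_exp_le _ ‖x‖ _ _
    _ ≤ q / (2 * ‖x‖) + ‖x‖ * (Real.pi * (1 / q + |q * α - p|)) := by gcongr
    _ = q / (2 * ‖x‖) + Real.pi * ‖x‖ * (1 / q + |q * α - p|) := by ring

theorem zero_mem_fermatSpiral (α : ℝ) : (0 : ℂ) ∈ fermatSpiral α := ⟨0, by simp⟩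

theorem IsEuclideanRemainder.of_int {a : ℤ → ℤ} {η : ℤ → ℝ} (hlt : η 0 < η (-1))
    (hrec : ∀ k : ℤ, 0 ≤ k → η (k - 1) = a (k + 1) * η k + η (k + 1))
    (hpos : ∀ k : ℤ, 0 ≤ k → 0 < η (k + 1) ∧ η (k + 1) < η k) :
    IsEuclideanRemainder (fun k ↦ a (k + 1)) (fun k ↦ η (k - 1)) := by
  have hanti (k : ℕ) : η ((k + 1 : ℕ) - 1) < η (k - 1) := by
    cases k with
    | zero => simpa using hlt
    | succ k => simpa using (hpos k (Int.natCast_nonneg k)).2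
  refine ⟨fun k ↦ ?_, hanti, fun k ↦ ?_⟩
  · refine lt_trans ?_ (hanti k)
    cases k with
    | zero => simpa using (hpos 0 le_rfl).1.trans (hpos 0 le_rfl).2
    | succ k => simpa using (hpos k (Int.natCast_nonneg k)).1
  · convert hrec k (Int.natCast_nonneg k) using 3 <;> push_cast <;> ring_nf

theorem div_add_pi_mul_lt_six_mul_sqrt {B r q δ : ℝ} (hB : 1 ≤ B) (hr : 0 < r) (hq : 0 < q)
    (hqN : q ≤ 4 * √B * r) (hNq : 4 * √B * r ≤ (B + 1) * q) (hδ : 4 * √B * r * δ ≤ 1) :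
    q / (2 * r) + Real.pi * r * (1 / q + δ) < 6 * √B := by
  have hS : 0 < √B := Real.sqrt_pos.mpr (by linarith)
  have hradial : q / (2 * r) ≤ 2 * √B := by
    rw [div_le_iff₀ (by positivity)]
    linarith
  have hspacing : 4 * √B * r * (1 / q) ≤ B + 1 := by
    rwa [mul_one_div, div_le_iff₀ hq]
  have hangular : r * (1 / q + δ) ≤ 3 / 4 * √B := by
    have hsq : √B * √B = B := Real.mul_self_sqrt (by linarith)
    have hscaled : 4 * √B * (r * (1 / q + δ)) ≤ 4 * √B * (3 / 4 * √B) := by linarith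
    exact le_of_mul_le_mul_left hscaled (by positivity)
  calc q / (2 * r) + Real.pi * r * (1 / q + δ)
      = q / (2 * r) + Real.pi * (r * (1 / q + δ)) := by ring
    _ ≤ 2 * √B + Real.pi * (3 / 4 * √B) := by gcongr
    _ < 2 * √B + 4 * (3 / 4 * √B) := by
        gcongr
        exact Real.pi_lt_four
    _ ≤ 6 * √B := by linarith

/-- Let `α ∈ [0,1)` be irrational with continued fraction expansion
`α = [0; a₁, a₂, …]`, encoded by the Euclidean division data `η₋₁ = 1`, `η₀ = α`,
`η_{k-1} = a_{k+1} η_k + η_{k+1}` with `0 < η_{k+1} < η_k` for all `k ≥ 0`.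
If all partial quotients satisfy `aₖ ≤ B` for a positive integer `B`, then
`X(√t, α)` is `6√B`-relatively dense. -/
theorem fermatSpiral_relDense_of_bounded_partial_quotients
    (α : ℝ) (hα : α ∈ Set.Ico (0 : ℝ) 1) (hirr : Irrational α)
    (a : ℤ → ℤ) (η : ℤ → ℝ)
    (hη1 : η (-1) = 1) (hη0 : η 0 = α)
    (hrec : ∀ k : ℤ, 0 ≤ k → η (k - 1) = a (k + 1) * η k + η (k + 1))
    (hpos : ∀ k : ℤ, 0 ≤ k → 0 < η (k + 1) ∧ η (k + 1) < η k)
    (B : ℕ) (hB : 0 < B) (hbd : ∀ k : ℤ, 1 ≤ k → a k ≤ (B : ℤ)) :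
    ∀ x : ℂ, ∃ z ∈ fermatSpiral α, z ∈ Metric.ball x (6 * Real.sqrt B) := by
  intro x
  have hB' : (1 : ℝ) ≤ B := by exact_mod_cast hB
  have hS : 1 ≤ √(B : ℝ) := Real.one_le_sqrt.mpr hB'
  rcases lt_or_ge ‖x‖ 1 with hsmall | hlarge
  · exact ⟨0, zero_mem_fermatSpiral α, by rw [Metric.mem_ball, dist_zero_left]; linarith⟩
  have hη : IsEuclideanRemainder (fun k : ℕ ↦ a (k + 1)) (fun k : ℕ ↦ η (k - 1)) :=
    .of_int (by rw [hη0, hη1]; exact hα.2) hrec hpos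
  have hN : 1 ≤ 4 * √B * ‖x‖ := by nlinarith
  obtain ⟨p, q, hpq, hq, hqN, hNq, happrox⟩ :=
    hη.exists_isCoprime_approx (fun k ↦ hbd _ (by omega)) hN
  have happrox' : 4 * √B * ‖x‖ * |q * α - p| ≤ 1 := by simpa [hη0, hη1] using happrox
  obtain ⟨z, hz, hzx⟩ :=
    exists_mem_fermatSpiral_dist_le hpq hq α (norm_pos_iff.mp (one_pos.trans_le hlarge))
  exact ⟨z, hz, hzx.trans_lt <| div_add_pi_mul_lt_six_mul_sqrt hB' (by linarith)
    (by exact_mod_cast hq) hqN (by exact_mod_cast hNq) happrox'⟩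
end

section
/- (Three distance theorem.) Let α ∈ (0,1) be irrational with continued fraction data: partial quotients a₁, a₂, …, convergents pₖ/qₖ (defined by p₋₁=1, p₀=0, q₋₁=0, q₀=1, p_{k+1}=a_{k+1}pₖ+p_{k−1}, q_{k+1}=a_{k+1}qₖ+q_{k−1}), and ηₖ = (−1)ᵏ(qₖα − pₖ). Let N ∈ ℕ be written uniquely as N = s·qₖ + q_{k−1} + r with 1 ≤ s ≤ a_{k+1} and 0 ≤ r < qₖ. Then the N+1 points {nα mod 1 : n = 0, 1, …, N} partition the circle ℝ/ℤ into N+1 intervals having at most three distinct lengths: exactly N+1−qₖ intervals of length ηₖ, exactly r+1 intervals of length η_{k−1} − s·ηₖ, and exactly qₖ − (r+1) intervals of length η_{k−1} − (s−1)·ηₖ. -/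
/-- The points `{nα mod 1 : n = 0, …, N}` on the circle `ℝ/ℤ ≃ [0,1)`. -/
noncomputable def torusPts (α : ℝ) (N : ℕ) : Finset ℝ :=
  (Finset.range (N + 1)).image fun n : ℕ => Int.fract ((n : ℝ) * α)

/-- For a finite set `T ⊆ [0,1)` of points on the circle `ℝ/ℤ` and `t ∈ T`, the
length of the subinterval of the circle starting at `t`, i.e. the (cyclic) distance
from `t` to the next point of `T`. -/
noncomputable def cyclicGap (T : Finset ℝ) (t : ℝ) : ℝ :=
  sInf {d : ℝ | 0 < d ∧ Int.fract (t + d) ∈ T}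

/-!
Let `P/Q` and `P'/Q'` be the `k`-th and `(k-1)`-st convergents. As `(Q, P)` and `(Q', P')` form a
basis of `ℤ²`, every displacement `mα - z` is, up to the sign `(-1)ᵏ`, equal to `x ηₖ - y ηₖ₋₁` with
`m = x Q + y Q'`. Keeping both indices in `[0, N]` restricts `(x, y)` so much that, for even `k`,
the point following `nα` has index `n + Q` when this is at most `N`, and otherwise
`n - (c Q + Q')`, where `c` is `s` if this index is nonnegative and `s - 1` if not. For odd `k` the
same applies to `-α`, whose orbit is a rotation of the orbit of `α`.
-/

theorem map_range_add_add {β : Type*} {f : ℕ → β} {A B C : ℕ} {u v w : β}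
    (hu : ∀ n < A, f n = u) (hv : ∀ n < B, f (A + n) = v) (hw : ∀ n < C, f (A + B + n) = w) :
    (Multiset.range (A + B + C)).map f =
      Multiset.replicate A u + Multiset.replicate B v + Multiset.replicate C w := by
  have map_const {g : ℕ → β} {n : ℕ} {c : β} (h : ∀ i < n, g i = c) :
      (Multiset.range n).map g = Multiset.replicate n c :=
    Multiset.eq_replicate.2 ⟨by simp, by simpa using h⟩
  simp only [Multiset.range_add, Multiset.map_add, Multiset.map_map, Function.comp_def]
  rw [map_const hu, map_const hv, map_const hw]

section Rotation

theorem fract_add_injOn_Ico (c : ℝ) :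
    Set.InjOn (fun t : ℝ => Int.fract (t + c)) (Set.Ico 0 1) := by
  intro t ht u hu h
  obtain ⟨z, hz⟩ := Int.fract_eq_fract.1 h
  have htu : Int.fract t = Int.fract u := Int.fract_eq_fract.2 ⟨z, by linarith⟩
  rwa [Int.fract_eq_self.2 ht, Int.fract_eq_self.2 hu] at htu

theorem cyclicGap_image_fract_add {T : Finset ℝ} (hT : ↑T ⊆ Set.Ico (0 : ℝ) 1) (c t : ℝ) :
    cyclicGap (T.image fun u => Int.fract (u + c)) (Int.fract (t + c)) = cyclicGap T t := by
  have hrot (d : ℝ) : Int.fract (Int.fract (t + c) + d) = Int.fract (Int.fract (t + d) + c) :=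
    Int.fract_eq_fract.2 ⟨⌊t + d⌋ - ⌊t + c⌋, by push_cast [Int.fract]; ring⟩
  have hmem (d : ℝ) : Int.fract (Int.fract (t + c) + d) ∈ T.image (fun u => Int.fract (u + c)) ↔
      Int.fract (t + d) ∈ T := by
    rw [hrot, ← Finset.mem_coe, Finset.coe_image]
    exact (fract_add_injOn_Ico c).mem_image_iff hT ⟨Int.fract_nonneg _, Int.fract_lt_one _⟩
  simp only [cyclicGap, hmem]

theorem map_cyclicGap_image_fract_add {T : Finset ℝ} (hT : ↑T ⊆ Set.Ico (0 : ℝ) 1) (c : ℝ) :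
    (T.image fun u => Int.fract (u + c)).val.map
        (cyclicGap (T.image fun u => Int.fract (u + c))) =
      T.val.map (cyclicGap T) := by
  rw [Finset.image_val_of_injOn ((fract_add_injOn_Ico c).mono hT), Multiset.map_map]
  exact Multiset.map_congr rfl fun t _ => cyclicGap_image_fract_add hT c t

theorem coe_torusPts_subset_Ico (α : ℝ) (N : ℕ) : ↑(torusPts α N) ⊆ Set.Ico (0 : ℝ) 1 := by
  intro t ht
  obtain ⟨n, -, rfl⟩ := Finset.mem_image.1 (Finset.mem_coe.1 ht)
  exact ⟨Int.fract_nonneg _, Int.fract_lt_one _⟩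

theorem torusPts_neg (α : ℝ) (N : ℕ) :
    torusPts (-α) N = (torusPts α N).image fun t => Int.fract (t + -(N * α)) := by
  rw [torusPts, torusPts, Finset.image_image, ← Finset.range_image_pred_top_sub (N + 1),
    Finset.image_image, Finset.range_image_pred_top_sub]
  refine Finset.image_congr fun n hn => Int.fract_eq_fract.2 ⟨⌊(n : ℝ) * α⌋, ?_⟩
  have hnN : n ≤ N := Nat.lt_succ_iff.1 (Finset.mem_range.1 hn)
  simp only [Nat.add_sub_cancel, Nat.cast_sub hnN, Int.fract]
  ring

theorem map_cyclicGap_torusPts_neg (α : ℝ) (N : ℕ) :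
    (torusPts (-α) N).val.map (cyclicGap (torusPts (-α) N)) =
      (torusPts α N).val.map (cyclicGap (torusPts α N)) := by
  rw [torusPts_neg, map_cyclicGap_image_fract_add (coe_torusPts_subset_Ico α N)]

end Rotation

/-- The lengths of the positively oriented arcs, possibly winding around the circle, that lead from
the orbit point of index `n` to an orbit point of index at most `N`. Its least element is the gap
following the point of index `n`. -/
def arcLengths (α : ℝ) (N n : ℕ) : Set ℝ :=
  {d | 0 < d ∧ ∃ m ≤ N, ∃ z : ℤ, ((m : ℝ) - n) * α - z = d}

theorem cyclicGap_torusPts_fract (α : ℝ) (N n : ℕ) :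
    cyclicGap (torusPts α N) (Int.fract (n * α)) = sInf (arcLengths α N n) := by
  rw [cyclicGap, arcLengths]
  congr 1 with d
  refine and_congr_right fun _ => ?_
  simp only [torusPts, Finset.mem_image, Finset.mem_range, Nat.lt_succ_iff, Int.fract_eq_fract]
  refine exists_congr fun m => and_congr_right fun _ => ?_
  constructor
  · rintro ⟨z, hz⟩
    refine ⟨z - ⌊(n : ℝ) * α⌋, ?_⟩
    push_cast [← hz, Int.fract]
    ring
  · rintro ⟨z, rfl⟩
    refine ⟨z + ⌊(n : ℝ) * α⌋, ?_⟩
    push_cast [Int.fract]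
    ring

/-- Farey neighbours `P / Q < α < P' / Q'` (where `Q' = 0` is allowed), with errors `e = Q α - P`
and `e' = P' - Q' α`. The convergents of indices `k` and `k - 1` are of this form for even `k`, and
for odd `k` become so after changing the signs of `α`, `P` and `P'`. -/
structure IsFareyBracket (α : ℝ) (Q P Q' P' : ℤ) (e e' : ℝ) : Prop where
  pos : 0 < Q
  nonneg : 0 ≤ Q'
  det_eq_one : Q * P' - Q' * P = 1
  lower_error : e = Q * α - P
  upper_error : e' = P' - Q' * α
  lower_error_pos : 0 < e
  upper_error_pos : 0 < e'

namespace IsFareyBracket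

variable {α e e' : ℝ} {Q P Q' P' : ℤ}

theorem mul_sub_eq (h : IsFareyBracket α Q P Q' P' e e') (x y : ℤ) :
    ((x * Q + y * Q' : ℤ) : ℝ) * α - (x * P + y * P' : ℤ) = x * e - y * e' := by
  rw [h.lower_error, h.upper_error]
  push_cast
  ring

theorem exists_coordinates (h : IsFareyBracket α Q P Q' P' e e') (m z : ℤ) :
    ∃ x y : ℤ, m = x * Q + y * Q' ∧ z = x * P + y * P' :=
  ⟨m * P' - z * Q', z * Q - m * P, by linear_combination -m * h.det_eq_one,
    by linear_combination -z * h.det_eq_one⟩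

theorem mem_arcLengths (h : IsFareyBracket α Q P Q' P' e e') {N n : ℕ} {d : ℝ} :
    d ∈ arcLengths α N n ↔ 0 < d ∧ ∃ x y : ℤ,
      0 ≤ n + (x * Q + y * Q') ∧ n + (x * Q + y * Q') ≤ N ∧ x * e - y * e' = d := by
  refine and_congr_right fun _ => ⟨?_, ?_⟩
  · rintro ⟨m, hm, z, rfl⟩
    obtain ⟨x, y, hmn, rfl⟩ := h.exists_coordinates (m - n) z
    refine ⟨x, y, by omega, by omega, ?_⟩
    rw [← h.mul_sub_eq, ← hmn]
    push_cast
    ring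
  · rintro ⟨x, y, h_nonneg, h_le, rfl⟩
    obtain ⟨m, hm⟩ := Int.eq_ofNat_of_zero_le h_nonneg
    refine ⟨m, by omega, x * P + y * P', ?_⟩
    rw [← h.mul_sub_eq, show x * Q + y * Q' = m - n by omega]
    push_cast
    ring

theorem upper_error_sub_le (h : IsFareyBracket α Q P Q' P' e e') {c x y : ℤ} (hy : y < 0)
    (hxy : 0 < (c + 1) * Q + Q' + (x * Q + y * Q')) : e' - c * e ≤ x * e - y * e' := by
  have hyQ : y * Q' ≤ -1 * Q' := mul_le_mul_of_nonneg_right (by omega) h.nonneg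
  have hx : 0 < c + 1 + x := pos_of_mul_pos_left (by linarith) h.pos.le
  have hxe : (-c : ℝ) * e ≤ x * e :=
    mul_le_mul_of_nonneg_right (by exact_mod_cast (by omega : -c ≤ x)) h.lower_error_pos.le
  have hye : (y : ℝ) * e' ≤ -1 * e' :=
    mul_le_mul_of_nonneg_right (by exact_mod_cast (by omega : y ≤ -1)) h.upper_error_pos.le
  linarith

theorem le_mul_add_mul (h : IsFareyBracket α Q P Q' P' e e') {s x y : ℤ} (hs : s * e < e')
    (hy : 0 < y) (hxy : 0 ≤ x * e - y * e') : (s + 1) * Q + Q' ≤ x * Q + y * Q' := by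
  have hye : 1 * e' ≤ y * e' :=
    mul_le_mul_of_nonneg_right (by exact_mod_cast hy) h.upper_error_pos.le
  have hsx : (s : ℝ) < x := lt_of_mul_lt_mul_right (by linarith) h.lower_error_pos.le
  have hxQ : (s + 1) * Q ≤ x * Q :=
    mul_le_mul_of_nonneg_right (by exact_mod_cast hsx) h.pos.le
  have hyQ : 1 * Q' ≤ y * Q' := mul_le_mul_of_nonneg_right hy h.nonneg
  linarith

theorem coordinate_pos (h : IsFareyBracket α Q P Q' P' e e') {x y : ℤ} (hy : 0 ≤ y)
    (hxy : 0 < x * e - y * e') : 0 < x := by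
  have hye : 0 ≤ y * e' := mul_nonneg (by exact_mod_cast hy) h.upper_error_pos.le
  have hx : (0 : ℝ) < x := pos_of_mul_pos_left (by linarith) h.lower_error_pos.le
  exact_mod_cast hx

theorem mul_ne_intCast (h : IsFareyBracket α Q P Q' P' e e') {s m : ℤ} (hs : s * e < e')
    (hm : 0 < m) (hmlt : m < (s + 1) * Q + Q') (z : ℤ) : m * α ≠ z := by
  intro hmz
  obtain ⟨x, y, rfl, rfl⟩ := h.exists_coordinates m z
  have hzero : x * e - y * e' = 0 := by rw [← h.mul_sub_eq, hmz, sub_self]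
  rcases lt_or_ge 0 y with hy | hy
  · exact absurd (h.le_mul_add_mul hs hy hzero.ge) hmlt.not_ge
  · have hye : y * e' ≤ 0 :=
      mul_nonpos_of_nonpos_of_nonneg (by exact_mod_cast hy) h.upper_error_pos.le
    have hx : (x : ℝ) ≤ 0 := nonpos_of_mul_nonpos_left (by linarith) h.lower_error_pos
    have hxQ : x * Q ≤ 0 := mul_nonpos_of_nonpos_of_nonneg (by exact_mod_cast hx) h.pos.le
    have hyQ : y * Q' ≤ 0 := mul_nonpos_of_nonpos_of_nonneg hy h.nonneg
    linarith

theorem fract_mul_injOn (h : IsFareyBracket α Q P Q' P' e e') {s : ℤ} {N : ℕ} (hs : s * e < e')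
    (hN : N < (s + 1) * Q + Q') :
    Set.InjOn (fun n : ℕ => Int.fract (n * α)) (Finset.range (N + 1)) := by
  intro m hm n hn hmn
  wlog hlt : m < n generalizing m n
  · by_contra hne
    exact hne (this hn hm hmn.symm (by omega)).symm
  obtain ⟨z, hz⟩ := Int.fract_eq_fract.1 hmn.symm
  have hnN : n < N + 1 := Finset.mem_range.1 hn
  refine absurd ?_ (h.mul_ne_intCast (m := n - m) hs (by omega) (by omega) z)
  push_cast
  linarith

theorem isLeast_arcLengths_of_add_le (h : IsFareyBracket α Q P Q' P' e e') {s : ℤ} {N n : ℕ}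
    (hs : s * e < e') (hN : N < (s + 1) * Q + Q') (hn : n + Q ≤ N) :
    IsLeast (arcLengths α N n) e := by
  have hQ := h.pos
  have he := h.lower_error_pos
  refine ⟨h.mem_arcLengths.2 ⟨he, 1, 0, by omega, by omega, by simp⟩, ?_⟩
  intro d hd
  obtain ⟨hd, x, y, h_nonneg, h_le, rfl⟩ := h.mem_arcLengths.1 hd
  rcases lt_trichotomy y 0 with hy | rfl | hy
  · have hle := h.upper_error_sub_le (c := s - 1) (x := x) hy (by linarith)
    push_cast at hle
    linarith
  · have hx : (1 : ℝ) ≤ x := by exact_mod_cast h.coordinate_pos le_rfl hd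
    simpa using le_mul_of_one_le_left he.le hx
  · have := h.le_mul_add_mul hs hy hd.le
    omega

theorem isLeast_arcLengths_of_lt_add (h : IsFareyBracket α Q P Q' P' e e') {c : ℤ} {N n : ℕ}
    (hc0 : 0 ≤ c) (hc : c * e < e') (hnN : n ≤ N) (hN : N < n + Q) (hcn : c * Q + Q' ≤ n)
    (hnc : n < (c + 1) * Q + Q') : IsLeast (arcLengths α N n) (e' - c * e) := by
  have hcQ : 0 ≤ c * Q := mul_nonneg hc0 h.pos.le
  have hQ' := h.nonneg
  refine ⟨h.mem_arcLengths.2 ⟨by linarith, -c, -1, by linarith, by linarith, ?_⟩, ?_⟩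
  · push_cast
    ring
  intro d hd
  obtain ⟨hd, x, y, h_nonneg, h_le, rfl⟩ := h.mem_arcLengths.1 hd
  rcases lt_or_ge y 0 with hy | hy
  · exact h.upper_error_sub_le hy (by linarith)
  · have hxQ : 1 * Q ≤ x * Q := mul_le_mul_of_nonneg_right (h.coordinate_pos hy hd) h.pos.le
    have hyQ : 0 ≤ y * Q' := mul_nonneg hy hQ'
    linarith

theorem map_cyclicGap_torusPts_eq_map_range (h : IsFareyBracket α Q P Q' P' e e') {s : ℤ} {N : ℕ}
    (hs : s * e < e') (hN : N < (s + 1) * Q + Q') :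
    (torusPts α N).val.map (cyclicGap (torusPts α N)) =
      (Multiset.range (N + 1)).map fun n => sInf (arcLengths α N n) := by
  have hval : (torusPts α N).val = (Multiset.range (N + 1)).map fun n : ℕ => Int.fract (n * α) :=
    Finset.image_val_of_injOn (h.fract_mul_injOn hs hN)
  nth_rw 1 [hval]
  simp only [Multiset.map_map, Function.comp_def, cyclicGap_torusPts_fract]

theorem map_cyclicGap_torusPts (h : IsFareyBracket α Q P Q' P' e e') {s r : ℤ} {N : ℕ}
    (hs1 : 1 ≤ s) (hs : s * e < e') (hr0 : 0 ≤ r) (hrQ : r < Q) (hN : N = s * Q + Q' + r) :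
    (torusPts α N).val.map (cyclicGap (torusPts α N)) =
      Multiset.replicate (N + 1 - Q).toNat e +
      Multiset.replicate (r + 1).toNat (e' - s * e) +
      Multiset.replicate (Q - (r + 1)).toNat (e' - (s - 1) * e) := by
  have hQ' := h.nonneg
  have hQN : Q ≤ N := by nlinarith
  have hNlt : N < (s + 1) * Q + Q' := by linarith
  have hs_pred : ((s - 1 : ℤ) : ℝ) * e < e' := by
    push_cast
    linarith [h.lower_error_pos]
  have hlast : (s - 1) * Q = s * Q - Q := by ring
  have hnext : (s + 1) * Q = s * Q + Q := by ring
  rw [h.map_cyclicGap_torusPts_eq_map_range hs hNlt, add_right_comm,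
    show N + 1 = (N + 1 - Q).toNat + (Q - (r + 1)).toNat + (r + 1).toNat by omega]
  apply map_range_add_add
  · intro n hn
    exact (h.isLeast_arcLengths_of_add_le hs hNlt (by omega)).csInf_eq
  · intro n hn
    rw [(h.isLeast_arcLengths_of_lt_add (c := s - 1) (by omega) hs_pred (by omega) (by omega)
      (by omega) (by rw [sub_add_cancel]; omega)).csInf_eq]
    push_cast
    rfl
  · intro n hn
    exact (h.isLeast_arcLengths_of_lt_add (by omega) hs (by omega) (by omega)
      (by omega) (by omega)).csInf_eq

end IsFareyBracket

theorem exists_isFareyBracket {α e e' : ℝ} {Q P Q' P' k : ℤ} (hQ : 0 < Q) (hQ' : 0 ≤ Q')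
    (hdet : Q * P' - Q' * P = k.negOnePow) (he : e = (-1) ^ k * (Q * α - P))
    (he' : e' = (-1) ^ (k - 1) * (Q' * α - P')) (he_pos : 0 < e) (he'_pos : 0 < e') :
    ∃ (β : ℝ) (R R' : ℤ), (β = α ∨ β = -α) ∧ IsFareyBracket β Q R Q' R' e e' := by
  rcases Int.even_or_odd k with heven | hodd
  · rw [Int.negOnePow_even k heven, Units.val_one] at hdet
    rw [heven.neg_one_zpow] at he
    rw [(heven.sub_odd odd_one).neg_one_zpow] at he'
    exact ⟨α, P, P', .inl rfl, hQ, hQ', hdet, by linarith, by linarith, he_pos, he'_pos⟩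
  · rw [Int.negOnePow_odd k hodd, Units.val_neg, Units.val_one] at hdet
    rw [hodd.neg_one_zpow] at he
    rw [(hodd.sub_odd odd_one).neg_one_zpow] at he'
    refine ⟨-α, -P, -P', .inr rfl, hQ, hQ', by linarith, ?_, ?_, he_pos, he'_pos⟩ <;>
      push_cast <;> linarith

section Convergents

variable {a p q : ℤ → ℤ} {k : ℤ}

theorem convergents_det (hp : p (-1) = 1 ∧ p 0 = 0) (hq : q (-1) = 0 ∧ q 0 = 1)
    (hpq : ∀ k : ℤ, 0 ≤ k →
      p (k + 1) = a (k + 1) * p k + p (k - 1) ∧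
      q (k + 1) = a (k + 1) * q k + q (k - 1)) (hk : 0 ≤ k) :
    q k * p (k - 1) - q (k - 1) * p k = k.negOnePow := by
  induction k, hk using Int.leInduction with
  | base => simp [hp, hq]
  | succ j hj ih =>
    rw [(hpq j hj).1, (hpq j hj).2, add_sub_cancel_right, Int.negOnePow_succ, Units.val_neg]
    linear_combination -ih

theorem denominators_nonneg (hq0 : 0 ≤ q (-1) ∧ 0 ≤ q 0)
    (hq : ∀ j : ℤ, 0 ≤ j → q (j + 1) = a (j + 1) * q j + q (j - 1))
    (ha : ∀ j : ℤ, 0 ≤ j → j < k → 0 ≤ a (j + 1)) (hk : 0 ≤ k) :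
    0 ≤ q (k - 1) ∧ 0 ≤ q k := by
  induction k, hk using Int.leInduction with
  | base => simpa using hq0
  | succ j hj ih =>
    obtain ⟨hpred, hj_nonneg⟩ := ih fun i hi hij => ha i hi (by omega)
    rw [add_sub_cancel_right, hq j hj]
    exact ⟨hj_nonneg, add_nonneg (mul_nonneg (ha j hj (by omega)) hj_nonneg) hpred⟩

variable {α : ℝ} {η : ℤ → ℝ}

theorem errors_recurrence
    (hpq : ∀ k : ℤ, 0 ≤ k →
      p (k + 1) = a (k + 1) * p k + p (k - 1) ∧
      q (k + 1) = a (k + 1) * q k + q (k - 1))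
    (hηdef : ∀ k : ℤ, -1 ≤ k → η k = (-1 : ℝ) ^ k * ((q k : ℝ) * α - (p k : ℝ))) (hk : 0 ≤ k) :
    η (k - 1) = a (k + 1) * η k + η (k + 1) := by
  have h_ne : (-1 : ℝ) ≠ 0 := by norm_num
  rw [hηdef (k - 1) (by omega), hηdef k (by omega), hηdef (k + 1) (by omega),
    zpow_sub_one₀ h_ne, zpow_add_one₀ h_ne, (hpq k hk).1, (hpq k hk).2]
  push_cast
  ring

theorem partialQuotient_nonneg {a : ℤ} {e₀ e₁ e₂ : ℝ} (hrec : e₀ = a * e₁ + e₂) (h₀ : 0 ≤ e₀)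
    (h₁ : 0 ≤ e₁) (h₂₁ : e₂ < e₁) : 0 ≤ a := by
  have ha : (-1 : ℝ) < a := lt_of_mul_lt_mul_right (by linarith) h₁
  exact Int.lt_iff_add_one_le.1 (by exact_mod_cast ha)

theorem errors_pos {j : ℤ} (hη : 0 < η (-1))
    (hpos : 0 ≤ j → 0 < η (j + 1) ∧ η (j + 1) < η j) (hj : -1 ≤ j) : 0 < η j := by
  rcases hj.eq_or_lt with rfl | hj
  · exact hη
  · obtain ⟨hsucc, hlt⟩ := hpos (by omega)
    exact hsucc.trans hlt

end Convergents

theorem three_distance_theorem_general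
    (α : ℝ) (a p q : ℤ → ℤ) (η : ℤ → ℝ)
    (hp : p (-1) = 1 ∧ p 0 = 0) (hq : q (-1) = 0 ∧ q 0 = 1)
    (hpq : ∀ k : ℤ, 0 ≤ k →
      p (k + 1) = a (k + 1) * p k + p (k - 1) ∧
      q (k + 1) = a (k + 1) * q k + q (k - 1))
    (hηdef : ∀ k : ℤ, -1 ≤ k → η k = (-1 : ℝ) ^ k * ((q k : ℝ) * α - (p k : ℝ)))
    (k : ℤ) (hk : 0 ≤ k)
    (hpos : ∀ j : ℤ, 0 ≤ j → j ≤ k → 0 < η (j + 1) ∧ η (j + 1) < η j)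
    (N : ℕ) (s r : ℤ) (hN : (N : ℤ) = s * q k + q (k - 1) + r)
    (hs1 : 1 ≤ s) (hsa : s ≤ a (k + 1)) (hr0 : 0 ≤ r) (hrq : r < q k) :
    (torusPts α N).val.map (cyclicGap (torusPts α N)) =
      Multiset.replicate ((N + 1 - q k).toNat) (η k) +
      Multiset.replicate ((r + 1).toNat) (η (k - 1) - (s : ℝ) * η k) +
      Multiset.replicate ((q k - (r + 1)).toNat) (η (k - 1) - ((s : ℝ) - 1) * η k) := by
  have hη_pos {j : ℤ} (hj : -1 ≤ j) (hjk : j ≤ k) : 0 < η j :=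
    errors_pos (by simp [hηdef, hp, hq]) (fun hj0 => hpos j hj0 hjk) hj
  have ha (j : ℤ) (hj : 0 ≤ j) (hjk : j < k) : 0 ≤ a (j + 1) :=
    partialQuotient_nonneg (errors_recurrence hpq hηdef hj) (hη_pos (by omega) (by omega)).le
      (hη_pos (by omega) hjk.le).le (hpos j hj hjk.le).2
  have hq_nonneg : 0 ≤ q (k - 1) :=
    (denominators_nonneg (by simp [hq]) (fun j hj => (hpq j hj).2) ha hk).1
  have hs : s * η k < η (k - 1) := by
    have hsη : s * η k ≤ a (k + 1) * η k :=
      mul_le_mul_of_nonneg_right (by exact_mod_cast hsa) (hη_pos (by omega) le_rfl).le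
    linarith [errors_recurrence hpq hηdef hk, (hpos k hk le_rfl).1]
  obtain ⟨β, P, P', hβ, h⟩ := exists_isFareyBracket (hr0.trans_lt hrq) hq_nonneg
    (convergents_det hp hq hpq hk) (hηdef k (by omega)) (hηdef (k - 1) (by omega))
    (hη_pos (by omega) le_rfl) (hη_pos (by omega) (by omega))
  rcases hβ with rfl | rfl
  · exact h.map_cyclicGap_torusPts hs1 hs hr0 hrq hN
  · rw [← map_cyclicGap_torusPts_neg]
    exact h.map_cyclicGap_torusPts hs1 hs hr0 hrq hN

/-- **three distance theorem.** Let `α ∈ (0,1)` be irrational, with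
partial quotients `a`, convergents `pₖ/qₖ` (`p₋₁ = 1`, `p₀ = 0`, `q₋₁ = 0`, `q₀ = 1`,
`p_{k+1} = a_{k+1} pₖ + p_{k-1}`, `q_{k+1} = a_{k+1} qₖ + q_{k-1}`) and
`ηₖ = (−1)ᵏ (qₖ α − pₖ)`, which satisfy `η_{k-1} = a_{k+1} ηₖ + η_{k+1}` with
`0 < η_{k+1} < ηₖ`.  Write `N = s·qₖ + q_{k-1} + r` with `1 ≤ s ≤ a_{k+1}` and
`0 ≤ r < qₖ`.  Then the `N+1` points `{nα mod 1 : n = 0, …, N}` partition the circle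
`ℝ/ℤ` into `N+1` intervals of at most three lengths: exactly `N+1−qₖ` intervals of
length `ηₖ`, exactly `r+1` intervals of length `η_{k-1} − s·ηₖ`, and exactly
`qₖ−(r+1)` intervals of length `η_{k-1} − (s−1)·ηₖ`.  (The multiset of the lengths
of the `N+1` subintervals is computed by mapping `cyclicGap` over the points.) -/
theorem three_distance_theorem
    (α : ℝ) (hα : α ∈ Set.Ioo (0 : ℝ) 1) (hirr : Irrational α)
    (a p q : ℤ → ℤ) (η : ℤ → ℝ)
    (hp : p (-1) = 1 ∧ p 0 = 0) (hq : q (-1) = 0 ∧ q 0 = 1)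
    (hpq : ∀ k : ℤ, 0 ≤ k →
      p (k + 1) = a (k + 1) * p k + p (k - 1) ∧
      q (k + 1) = a (k + 1) * q k + q (k - 1))
    (hηdef : ∀ k : ℤ, -1 ≤ k → η k = (-1 : ℝ) ^ k * ((q k : ℝ) * α - (p k : ℝ)))
    (hpos : ∀ k : ℤ, 0 ≤ k → 0 < η (k + 1) ∧ η (k + 1) < η k)
    (N : ℕ) (k s r : ℤ) (hk : 0 ≤ k)
    (hN : (N : ℤ) = s * q k + q (k - 1) + r)
    (hs1 : 1 ≤ s) (hsa : s ≤ a (k + 1)) (hr0 : 0 ≤ r) (hrq : r < q k) :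
    (torusPts α N).val.map (cyclicGap (torusPts α N)) =
      Multiset.replicate ((N + 1 - q k).toNat) (η k) +
      Multiset.replicate ((r + 1).toNat) (η (k - 1) - (s : ℝ) * η k) +
      Multiset.replicate ((q k - (r + 1)).toNat) (η (k - 1) - ((s : ℝ) - 1) * η k) :=
  three_distance_theorem_general α a p q η hp hq hpq hηdef k hk (fun j hj _ => hpos j hj)
    N s r hN hs1 hsa hr0 hrq
end

section
/- Let α ∈ (0,1) be irrational. Then α is badly approximable if and only if there exists a positive constant R such that for every N ∈ ℕ, the ratio between any two lengths of the subintervals into which the points {nα mod 1 : n = 0, 1, …, N} divide the circle ℝ/ℤ is bounded by R. -/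
/-!
Bad approximability means that every gap is comparable to `1 / N`.

If `q * |q * α - p| ≥ C` throughout, a gap is `|k * α - z|` with `|k| ≤ N`, hence at least
`C / (N + 1)`. From above, take a Dirichlet approximation `r` of `α` with denominator
`b ≤ N + 1`: up to an error of order `1 / N`, the points `0, α, …, (b - 1) * α` are all the
multiples of `1 / b` modulo `1`, and bad approximability forces `b` to be of order `N`.

Conversely, for `N = q` the points `0` and `q * α` produce a gap of length at most `|q * α - p|`,
so a bound on the ratios makes every gap `O(|q * α - p|)`, while the `q + 1` gaps cover the circle.
-/

section CyclicGap

variable {T : Finset ℝ}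

lemma cyclicGap_nonneg (T : Finset ℝ) (t : ℝ) : 0 ≤ cyclicGap T t :=
  Real.sInf_nonneg fun _ hd => hd.1.le

lemma cyclicGap_le_sub {x y : ℝ} (hxy : x < y) (hy : Int.fract y ∈ T) :
    cyclicGap T x ≤ y - x :=
  csInf_le ⟨0, fun _ hd => hd.1.le⟩ ⟨sub_pos.2 hxy, by rwa [add_sub_cancel]⟩

lemma cyclicGap_fract (T : Finset ℝ) (x : ℝ) : cyclicGap T (Int.fract x) = cyclicGap T x := by
  have hfract (d : ℝ) : Int.fract (Int.fract x + d) = Int.fract (x + d) :=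
    Int.fract_eq_fract.2 ⟨-⌊x⌋, by rw [Int.fract]; push_cast; ring⟩
  simp only [cyclicGap, hfract]

lemma exists_pos_fract_add_mem (hT : (T : Set ℝ) ⊆ Set.Ico 0 1) (hne : T.Nonempty) (t : ℝ) :
    ∃ d : ℝ, 0 < d ∧ Int.fract (t + d) ∈ T := by
  obtain ⟨s, hs⟩ := hne
  have hs01 := hT hs
  refine ⟨s + 1 - Int.fract t, by linarith [hs01.1, Int.fract_lt_one t], ?_⟩
  have hadd : t + (s + 1 - Int.fract t) = s + ((⌊t⌋ + 1 : ℤ) : ℝ) := by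
    rw [Int.fract]; push_cast; ring
  rwa [hadd, Int.fract_add_intCast, Int.fract_eq_self.2 hs01]

lemma le_cyclicGap (hT : (T : Set ℝ) ⊆ Set.Ico 0 1) (hne : T.Nonempty) {t c : ℝ}
    (hc : ∀ d : ℝ, 0 < d → Int.fract (t + d) ∈ T → c ≤ d) : c ≤ cyclicGap T t :=
  le_csInf (exists_pos_fract_add_mem hT hne t) fun d hd => hc d hd.1 hd.2

lemma Ico_subset_biUnion_Icc_cyclicGap (hT : (T : Set ℝ) ⊆ Set.Ico 0 1) (hne : T.Nonempty) :
    Set.Ico (T.min' hne) (T.min' hne + 1) ⊆ ⋃ t ∈ T, Set.Icc t (t + cyclicGap T t) := by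
  intro x hx
  obtain ⟨t, ht, hmax⟩ := (T.filter (· ≤ x)).exists_max_image id
    ⟨T.min' hne, Finset.mem_filter.2 ⟨T.min'_mem hne, hx.1⟩⟩
  obtain ⟨htT, htx⟩ := Finset.mem_filter.1 ht
  refine Set.mem_biUnion htT ⟨htx, le_of_not_gt fun hgap => ?_⟩
  obtain ⟨d, ⟨hd, hdT⟩, hdx⟩ := exists_lt_of_csInf_lt (exists_pos_fract_add_mem hT hne t)
    (lt_sub_iff_add_lt'.2 hgap)
  have ht0 : 0 ≤ t := (hT htT).1
  have hmin1 : T.min' hne < 1 := (hT (T.min'_mem hne)).2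
  rcases lt_or_ge (t + d) 1 with hlt | hge
  · rw [Int.fract_eq_self.2 ⟨by linarith, hlt⟩] at hdT
    have : t + d ≤ t := hmax _ (Finset.mem_filter.2 ⟨hdT, by linarith⟩)
    linarith
  · have hfract : Int.fract (t + d) = t + d - 1 :=
      Int.fract_eq_iff.2 ⟨by linarith, by linarith [hx.2], 1, by simp⟩
    linarith [hx.2, T.min'_le _ hdT]

lemma one_le_sum_cyclicGap (hT : (T : Set ℝ) ⊆ Set.Ico 0 1) (hne : T.Nonempty) :
    1 ≤ ∑ t ∈ T, cyclicGap T t := by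
  have hvol := (MeasureTheory.measure_mono (μ := MeasureTheory.volume)
    (Ico_subset_biUnion_Icc_cyclicGap hT hne)).trans (MeasureTheory.measure_biUnion_finset_le _ _)
  simp only [Real.volume_Ico, Real.volume_Icc, add_sub_cancel_left] at hvol
  rwa [← ENNReal.ofReal_sum_of_nonneg fun t _ => cyclicGap_nonneg T t,
    ENNReal.ofReal_le_ofReal_iff (Finset.sum_nonneg fun t _ => cyclicGap_nonneg T t)] at hvol

end CyclicGap

section TorusPts

variable {α : ℝ} {N : ℕ}

lemma mem_torusPts {x : ℝ} : x ∈ torusPts α N ↔ ∃ n ≤ N, Int.fract ((n : ℝ) * α) = x := by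
  simp [torusPts]

lemma fract_mul_mem_torusPts {n : ℕ} (hn : n ≤ N) : Int.fract ((n : ℝ) * α) ∈ torusPts α N :=
  mem_torusPts.2 ⟨n, hn, rfl⟩

lemma fract_intCast_mem_torusPts (z : ℤ) : Int.fract (z : ℝ) ∈ torusPts α N :=
  mem_torusPts.2 ⟨0, N.zero_le, by simp⟩

lemma torusPts_nonempty : (torusPts α N).Nonempty :=
  ⟨_, fract_intCast_mem_torusPts 0⟩

lemma torusPts_subset_Ico : (torusPts α N : Set ℝ) ⊆ Set.Ico 0 1 := by
  intro x hx
  obtain ⟨n, -, rfl⟩ := mem_torusPts.1 hx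
  exact ⟨Int.fract_nonneg _, Int.fract_lt_one _⟩

lemma card_torusPts_le : (torusPts α N).card ≤ N + 1 :=
  Finset.card_image_le.trans_eq (Finset.card_range _)

lemma one_le_mul_of_forall_cyclicGap_le {g : ℝ}
    (hg : ∀ t ∈ torusPts α N, cyclicGap (torusPts α N) t ≤ g) : 1 ≤ ((N : ℝ) + 1) * g := by
  have hg0 : 0 ≤ g := (cyclicGap_nonneg _ _).trans (hg _ (fract_intCast_mem_torusPts 0))
  calc (1 : ℝ) ≤ ∑ t ∈ torusPts α N, cyclicGap (torusPts α N) t :=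
        one_le_sum_cyclicGap torusPts_subset_Ico torusPts_nonempty
    _ ≤ (torusPts α N).card * g := by
        simpa only [nsmul_eq_mul] using Finset.sum_le_card_nsmul _ _ g hg
    _ ≤ ((N : ℝ) + 1) * g := by
        gcongr
        exact_mod_cast card_torusPts_le

lemma exists_cyclicGap_le_abs {n : ℕ} (hn : n ≤ N) {p : ℤ} (hne : (n : ℝ) * α ≠ p) :
    ∃ u ∈ torusPts α N, cyclicGap (torusPts α N) u ≤ |(n : ℝ) * α - p| := by
  rcases hne.lt_or_gt with hlt | hgt
  · refine ⟨_, fract_mul_mem_torusPts hn, ?_⟩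
    rw [cyclicGap_fract, abs_sub_comm, abs_of_pos (sub_pos.2 hlt)]
    exact cyclicGap_le_sub hlt (fract_intCast_mem_torusPts p)
  · refine ⟨_, fract_intCast_mem_torusPts p, ?_⟩
    rw [cyclicGap_fract, abs_of_pos (sub_pos.2 hgt)]
    exact cyclicGap_le_sub hgt (fract_mul_mem_torusPts hn)

lemma exists_eq_intCast_mul_sub_of_mem_torusPts {u d : ℝ} (hu : u ∈ torusPts α N)
    (hd : Int.fract (u + d) ∈ torusPts α N) :
    ∃ k z : ℤ, |k| ≤ N ∧ d = k * α - z := by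
  obtain ⟨n, hn, rfl⟩ := mem_torusPts.1 hu
  obtain ⟨m, hm, hmd⟩ := mem_torusPts.1 hd
  obtain ⟨z, hz⟩ := Int.fract_eq_fract.1 hmd
  refine ⟨m - n, z - ⌊(n : ℝ) * α⌋, abs_sub_le_iff.2 ⟨by omega, by omega⟩, ?_⟩
  rw [Int.fract] at hz
  push_cast
  linarith

end TorusPts

section RationalApproximation

lemma exists_lt_den_natCast_mul_eq (r : ℚ) (j : ℤ) :
    ∃ m < r.den, ∃ l : ℤ, (m : ℚ) * r = j / r.den + l := by
  obtain ⟨a, b, hab⟩ := Rat.isCoprime_num_den r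
  obtain ⟨m, hm, hmod⟩ := Int.existsUnique_equiv_nat (j * a) (Int.natCast_pos.2 r.den_pos)
  obtain ⟨c, hc⟩ := hmod.symm.dvd
  refine ⟨m, by exact_mod_cast hm, c * r.num - j * b, ?_⟩
  have hnum : (m : ℤ) * r.num = j + r.den * (c * r.num - j * b) := by
    linear_combination r.num * hc + j * hab
  have hden : (r.den : ℚ) ≠ 0 := by exact_mod_cast r.den_ne_zero
  rw [← mul_right_inj' hden, mul_left_comm, Rat.den_mul_eq_num, mul_add, mul_div_cancel₀ _ hden]
  exact_mod_cast hnum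

lemma exists_lt_den_mul_sub_intCast_mem_Ioc {α ε : ℝ} {r : ℚ} (hr : r.den * |α - r| ≤ ε) (x : ℝ) :
    ∃ m < r.den, ∃ l : ℤ, (m : ℝ) * α - l ∈ Set.Ioc x (x + (1 / r.den + 2 * ε)) := by
  have hden : (0 : ℝ) < r.den := by exact_mod_cast r.den_pos
  obtain ⟨j, hj, hj'⟩ : ∃ j : ℤ, x + ε < j / r.den ∧ (j : ℝ) / r.den ≤ x + ε + 1 / r.den := by
    refine ⟨⌊(x + ε) * r.den⌋ + 1, ?_, ?_⟩
    · rw [lt_div_iff₀ hden]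
      exact_mod_cast Int.lt_floor_add_one ((x + ε) * r.den)
    · rw [div_le_iff₀ hden, add_mul _ (1 / (r.den : ℝ)), one_div_mul_cancel hden.ne']
      push_cast
      gcongr
      exact Int.floor_le _
  obtain ⟨m, hm, l, hl⟩ := exists_lt_den_natCast_mul_eq r j
  have hl' : (m : ℝ) * r = j / r.den + l := by exact_mod_cast hl
  have herr : |(m : ℝ) * α - m * r| ≤ ε := by
    rw [← mul_sub, abs_mul, Nat.abs_cast]
    exact (by gcongr : (m : ℝ) * |α - r| ≤ r.den * |α - r|).trans hr
  rw [abs_le] at herr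
  exact ⟨m, hm, l, by linarith, by linarith⟩

lemma cyclicGap_torusPts_le_of_rat {α ε : ℝ} {N : ℕ} {r : ℚ} (hr : r.den * |α - r| ≤ ε)
    (hN : r.den ≤ N + 1) (t : ℝ) : cyclicGap (torusPts α N) t ≤ 1 / r.den + 2 * ε := by
  obtain ⟨m, hm, l, hlt, hle⟩ := exists_lt_den_mul_sub_intCast_mem_Ioc hr t
  have hmem : Int.fract ((m : ℝ) * α - l) ∈ torusPts α N := by
    rw [Int.fract_sub_intCast]
    exact fract_mul_mem_torusPts (by omega)
  linarith [cyclicGap_le_sub hlt hmem]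

end RationalApproximation

section BadlyApproximable

variable {α C : ℝ} (h : ∀ (p : ℤ) (q : ℕ), 1 ≤ q → C ≤ (q : ℝ) * |(q : ℝ) * α - (p : ℝ)|)

include h

lemma approx_const_le_one : C ≤ 1 := by
  have hfract := h ⌊α⌋ 1 le_rfl
  rw [Nat.cast_one, one_mul, one_mul, Int.self_sub_floor, Int.abs_fract] at hfract
  exact hfract.trans (Int.fract_lt_one α).le

lemma approx_const_le_abs_mul_abs {k : ℤ} (hk : k ≠ 0) (z : ℤ) :
    C ≤ |(k : ℝ)| * |(k : ℝ) * α - z| := by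
  obtain ⟨q, rfl | rfl⟩ := k.eq_nat_or_neg
  · simpa using h z q (by omega)
  · calc C ≤ q * |q * α - ((-z : ℤ) : ℝ)| := h (-z) q (by omega)
      _ = |((-q : ℤ) : ℝ)| * |((-q : ℤ) : ℝ) * α - z| := by
          push_cast
          rw [abs_neg, Nat.abs_cast, ← abs_neg (-(q : ℝ) * α - z)]
          ring_nf

lemma div_le_cyclicGap_torusPts (hC : 0 ≤ C) {N : ℕ} {u : ℝ} (hu : u ∈ torusPts α N) :
    C / (N + 1) ≤ cyclicGap (torusPts α N) u := by
  refine le_cyclicGap torusPts_subset_Ico torusPts_nonempty fun d hd hdT => ?_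
  obtain ⟨k, z, hkN, rfl⟩ := exists_eq_intCast_mul_sub_of_mem_torusPts hu hdT
  rcases eq_or_ne k 0 with rfl | hk
  · have hz : (1 : ℝ) ≤ (0 : ℤ) * α - z := by
      simp only [Int.cast_zero, zero_mul, zero_sub] at hd ⊢
      exact_mod_cast hd
    exact (div_le_self hC (by simp)).trans ((approx_const_le_one h).trans hz)
  · have hkN' : |(k : ℝ)| ≤ N := by exact_mod_cast hkN
    rw [div_le_iff₀' (by positivity)]
    calc C ≤ |(k : ℝ)| * |(k : ℝ) * α - z| := approx_const_le_abs_mul_abs h hk z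
      _ = |(k : ℝ)| * (k * α - z) := by rw [abs_of_pos hd]
      _ ≤ (N + 1) * (k * α - z) := by gcongr; linarith

lemma cyclicGap_torusPts_le_div (hC : 0 < C) (N : ℕ) (t : ℝ) :
    cyclicGap (torusPts α N) t ≤ (1 / C + 2) / (N + 1) := by
  obtain ⟨r, hr, hrN⟩ := Real.exists_rat_abs_sub_le_and_den_le α N.succ_pos
  have hden : (0 : ℝ) < r.den := by exact_mod_cast r.den_pos
  have happrox : r.den * |α - r| ≤ 1 / ((N : ℝ) + 1) := by
    calc r.den * |α - r| ≤ r.den * (1 / (((N.succ : ℕ) + 1) * r.den)) := by gcongr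
      _ = 1 / ((N.succ : ℕ) + 1) := by field_simp
      _ ≤ 1 / ((N : ℝ) + 1) := by gcongr; exact N.le_succ
  have hbad : C ≤ r.den * (1 / ((N : ℝ) + 1)) := by
    have hnum : (r.den : ℝ) * r = r.num := by exact_mod_cast Rat.den_mul_eq_num r
    calc C ≤ r.den * |r.den * α - r.num| := h r.num r.den r.den_pos
      _ = r.den * (r.den * |α - r|) := by rw [← hnum, ← mul_sub, abs_mul, Nat.abs_cast]
      _ ≤ r.den * (1 / ((N : ℝ) + 1)) := by gcongr
  calc cyclicGap (torusPts α N) t ≤ 1 / r.den + 2 * (1 / ((N : ℝ) + 1)) :=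
        cyclicGap_torusPts_le_of_rat happrox hrN t
    _ ≤ 1 / C * (1 / ((N : ℝ) + 1)) + 2 * (1 / ((N : ℝ) + 1)) := by
        gcongr
        rwa [div_le_iff₀ hden, mul_assoc, one_div_mul_eq_div, le_div_iff₀ hC, one_mul, mul_comm]
    _ = (1 / C + 2) / (N + 1) := by ring

end BadlyApproximable

lemma one_le_mul_abs_of_cyclicGap_ratio_le {α R : ℝ} {q : ℕ} {p : ℤ} (hR : 0 ≤ R)
    (hne : (q : ℝ) * α ≠ p)
    (h : ∀ t ∈ torusPts α q, ∀ u ∈ torusPts α q,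
      cyclicGap (torusPts α q) t ≤ R * cyclicGap (torusPts α q) u) :
    1 ≤ ((q : ℝ) + 1) * (R * |(q : ℝ) * α - p|) := by
  obtain ⟨u, hu, hgap⟩ := exists_cyclicGap_le_abs le_rfl hne
  exact one_le_mul_of_forall_cyclicGap_le fun t ht => (h t ht u hu).trans (by gcongr)

theorem badlyApproximable_iff_bounded_gap_ratios_general {α : ℝ} (hirr : Irrational α) :
    IsBadlyApproximable α ↔
      ∃ R : ℝ, 0 < R ∧ ∀ N : ℕ, ∀ t ∈ torusPts α N, ∀ u ∈ torusPts α N,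
        cyclicGap (torusPts α N) t ≤ R * cyclicGap (torusPts α N) u := by
  constructor
  · rintro ⟨C, hC, h⟩
    refine ⟨(1 / C + 2) / C, by positivity, fun N t _ u hu => ?_⟩
    calc cyclicGap (torusPts α N) t ≤ (1 / C + 2) / (N + 1) := cyclicGap_torusPts_le_div h hC N t
      _ = (1 / C + 2) / C * (C / (N + 1)) := by field_simp
      _ ≤ (1 / C + 2) / C * cyclicGap (torusPts α N) u := by
          gcongr
          exact div_le_cyclicGap_torusPts h hC.le hu
  · rintro ⟨R, hR, h⟩
    refine ⟨1 / (2 * R), by positivity, fun p q hq => ?_⟩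
    have hne : (q : ℝ) * α ≠ p := (hirr.natCast_mul (by omega)).ne_int p
    have hq1 : (1 : ℝ) ≤ q := by exact_mod_cast hq
    rw [div_le_iff₀' (by positivity)]
    calc (1 : ℝ) ≤ (q + 1) * (R * |q * α - p|) :=
          one_le_mul_abs_of_cyclicGap_ratio_le hR.le hne (h q)
      _ ≤ (2 * q) * (R * |q * α - p|) := by gcongr; linarith
      _ = 2 * R * (q * |q * α - p|) := by ring

/-- An irrational `α ∈ (0,1)` is badly approximable if and only if
there is a constant `R > 0` such that for every `N ∈ ℕ`, the ratio of any two of the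
lengths of the subintervals into which the points `{nα mod 1 : n = 0, …, N}` divide
the circle `ℝ/ℤ` is at most `R`. -/
theorem badlyApproximable_iff_bounded_gap_ratios
    (α : ℝ) (hα : α ∈ Set.Ioo (0 : ℝ) 1) (hirr : Irrational α) :
    IsBadlyApproximable α ↔
      ∃ R : ℝ, 0 < R ∧ ∀ N : ℕ, ∀ t ∈ torusPts α N, ∀ u ∈ torusPts α N,
        cyclicGap (torusPts α N) t ≤ R * cyclicGap (torusPts α N) u := by
  exact badlyApproximable_iff_bounded_gap_ratios_general hirr
end
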